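/- arXiv:1102.0748 — 4 statements merged into one kernel-verified Lean document; each statement's English description precedes it below -/
import Mathlib

section
/- For every q in the open unit ball B = {z ∈ ℂ : |z| < 1}, one has lim_{n→∞} |∑_{k=-n}^{n} (-1)^k q^{k(k-1)/2} · C(2n, n+k)|^{1/(2n)} = 2, where C(m, j) denotes the binomial coefficient. -/
open scoped Classical

/-- Asymmetric crossing of two chords: `B = {a,b}` with `a < b` starts strictly
before `C = {c,d}` and they interleave: `a < c < b < d`. -/
def CrossAsym (B C : Finset ℕ) : Prop :=
  ∃ a b c d : ℕ, a < c ∧ c < b ∧ b < d ∧ B = {a, b} ∧ C = {c, d}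

/-- Two blocks cross: `a < c < b < d` or `c < a < d < b`. -/
def Crosses (B C : Finset ℕ) : Prop := CrossAsym B C ∨ CrossAsym C B

/-- A pairing on `[2n] = {1, …, 2n}`: a partition of `{1, …, 2n}` into blocks of size 2. -/
def IsPairing (n : ℕ) (π : Finset (Finset ℕ)) : Prop :=
  (∀ B ∈ π, B.card = 2 ∧ B ⊆ Finset.Icc 1 (2 * n)) ∧
  (∀ x ∈ Finset.Icc 1 (2 * n), ∃! B, B ∈ π ∧ x ∈ B)

/-- Number of crossings of a pairing: the number of unordered pairs of blocks that cross
(each crossing unordered pair `{B, C}` satisfies the asymmetric condition exactly once). -/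
noncomputable def crNum (π : Finset (Finset ℕ)) : ℕ :=
  Set.ncard {p : Finset ℕ × Finset ℕ | p.1 ∈ π ∧ p.2 ∈ π ∧ CrossAsym p.1 p.2}

/-- A pairing is parity-reversing if each block consists of one odd and one even number. -/
def ParityReversing (π : Finset (Finset ℕ)) : Prop :=
  ∀ B ∈ π, ∃ a b : ℕ, B = {a, b} ∧ Odd a ∧ Even b

/-- A pairing is connected if its blocks cannot be split into two nonempty families
with no crossing between the families. -/
def ConnectedPairing (π : Finset (Finset ℕ)) : Prop :=
  ¬ ∃ S T : Finset (Finset ℕ), S ∪ T = π ∧ Disjoint S T ∧ S.Nonempty ∧ T.Nonempty ∧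
      ∀ B ∈ S, ∀ C ∈ T, ¬ Crosses B C

/-- `tCount n k`: the number of pairings on `[2n]` with exactly `k` crossings. -/
noncomputable def tCount (n k : ℕ) : ℕ :=
  Set.ncard {π : Finset (Finset ℕ) | IsPairing n π ∧ crNum π = k}

/-- `rCount n k`: the number of parity-reversing pairings on `[2n]` with exactly `k` crossings. -/
noncomputable def rCount (n k : ℕ) : ℕ :=
  Set.ncard {π : Finset (Finset ℕ) | IsPairing n π ∧ ParityReversing π ∧ crNum π = k}

/-- `bCount n k`: the number of connected parity-reversing pairings on `[2n]`
with exactly `k` crossings. -/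
noncomputable def bCount (n k : ℕ) : ℕ :=
  Set.ncard {π : Finset (Finset ℕ) |
    IsPairing n π ∧ ParityReversing π ∧ ConnectedPairing π ∧ crNum π = k}

/-- `bTot n`: the number of connected parity-reversing pairings on `[2n]` (equals 1 for `n = 0`). -/
noncomputable def bTot (n : ℕ) : ℕ :=
  Set.ncard {π : Finset (Finset ℕ) |
    IsPairing n π ∧ ParityReversing π ∧ ConnectedPairing π}

/-- The Touchard alternating sum `∑_{k=-n}^n (-1)^k q^{k(k-1)/2} C(2n, n+k)`. -/
noncomputable def touchardSum (n : ℕ) (q : ℂ) : ℂ :=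
  ∑ k ∈ Finset.Icc (-(n : ℤ)) (n : ℤ),
    (-1 : ℂ) ^ k * q ^ ((k * (k - 1)) / 2).toNat * ((2 * n).choose ((n : ℤ) + k).toNat : ℂ)

/-- `T_n(q) = ∑_k t_{n,k} q^k` as a complex polynomial function
(all crossing numbers of pairings on `[2n]` satisfy `k ≤ n*n`). -/
noncomputable def Tpoly (n : ℕ) (q : ℂ) : ℂ :=
  ∑ k ∈ Finset.range (n * n + 1), (tCount n k : ℂ) * q ^ k

/-- `T_n(q) = ∑_k t_{n,k} q^k` as a real polynomial function. -/
noncomputable def TpolyR (n : ℕ) (q : ℝ) : ℝ :=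
  ∑ k ∈ Finset.range (n * n + 1), (tCount n k : ℝ) * q ^ k

/-- `R_n(q) = ∑_k r_{n,k} q^k` as a real polynomial function. -/
noncomputable def RpolyR (n : ℕ) (q : ℝ) : ℝ :=
  ∑ k ∈ Finset.range (n * n + 1), (rCount n k : ℝ) * q ^ k

/-- Non-crossing partitions of `{1, …, 2n}` all of whose blocks have even size. -/
noncomputable def NCEvenPartitions (n : ℕ) : Finset (Finset (Finset ℕ)) :=
  ((Finset.Icc 1 (2 * n)).powerset.powerset).filter (fun π =>
    (∀ B ∈ π, B.Nonempty ∧ Even B.card) ∧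
    (∀ x ∈ Finset.Icc 1 (2 * n), ∃! B, B ∈ π ∧ x ∈ B) ∧
    ¬ ∃ a b c d : ℕ, a < b ∧ b < c ∧ c < d ∧
        ∃ B ∈ π, ∃ C ∈ π, B ≠ C ∧ a ∈ B ∧ c ∈ B ∧ b ∈ C ∧ d ∈ C)

/-! Put `θ k = (-1) ^ k (1 - 2 k) q ^ (k (k - 1) / 2)`. The reflection `k ↦ 1 - k` kills
`∑ (-1) ^ k q ^ (k (k - 1) / 2) C(2n + 1, n + k)`, which gives
`2 (2n + 1) T_n(q) = ∑ θ k C(2n + 1, n + k)` for the Touchard sum `T_n(q)`. Since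
`C(2n + 1, n) = (2n + 1) Cat_n`, the quotient `2 T_n(q) / Cat_n` is the sum of the `θ k` with
weights `C(2n + 1, n + k) / C(2n + 1, n)`, which are at most `1` and tend to `1`, so it converges to
`∑ θ k` by dominated convergence. By Jacobi's identity `∑ θ k = 2 (q; q)_∞ ^ 3`, which does not
vanish, so `|T_n(q)| ^ (1 / 2n)` has the same limit as `Cat_n ^ (1 / 2n)`, namely `2`.

Jacobi's identity is the same argument with other weights: differentiating MacMahon's finite triple
product at `-1` gives `∑ θ k [2n + 1 choose n + k]_q = 2 (q; q)_n ^ 2`, and the Gaussian binomials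
are bounded and tend to `1 / (q; q)_∞`.
-/

open Filter Topology

section GaussianBinomial

/-- The Gaussian binomial coefficient `[n choose k]_q`, defined by the `q`-Pascal rule, so that it
makes sense for every `q`, including roots of unity. -/
def gaussBinom {R : Type*} [CommSemiring R] (q : R) : ℕ → ℕ → R
  | _, 0 => 1
  | 0, _ + 1 => 0
  | n + 1, k + 1 => gaussBinom q n k + q ^ (k + 1) * gaussBinom q n (k + 1)

section CommSemiring

variable {R : Type*} [CommSemiring R] (q : R)

@[simp]
lemma gaussBinom_zero_right (n : ℕ) : gaussBinom q n 0 = 1 := by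
  cases n <;> rfl

lemma gaussBinom_succ_succ (n k : ℕ) :
    gaussBinom q (n + 1) (k + 1) = gaussBinom q n k + q ^ (k + 1) * gaussBinom q n (k + 1) :=
  rfl

lemma gaussBinom_eq_zero_of_lt {n k : ℕ} (h : n < k) : gaussBinom q n k = 0 := by
  induction n generalizing k with
  | zero => obtain ⟨k, rfl⟩ := Nat.exists_eq_add_one.mpr h; rfl
  | succ n ih =>
    obtain ⟨k, rfl⟩ := Nat.exists_eq_add_one.mpr (n.succ_pos.trans h)
    rw [gaussBinom_succ_succ, ih (by omega), ih (by omega), mul_zero, add_zero]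

lemma gaussBinom_self (n : ℕ) : gaussBinom q n n = 1 := by
  induction n with
  | zero => rfl
  | succ n ih =>
    rw [gaussBinom_succ_succ, ih, gaussBinom_eq_zero_of_lt q n.lt_succ_self, mul_zero, add_zero]

lemma pow_mul_gaussBinom_congr {a b n k : ℕ} (h : k ≤ n → a = b) :
    q ^ a * gaussBinom q n k = q ^ b * gaussBinom q n k := by
  rcases lt_or_ge n k with hk | hk
  · simp only [gaussBinom_eq_zero_of_lt q hk, mul_zero]
  · rw [h hk]

lemma gaussBinom_succ_succ' (n k : ℕ) :
    gaussBinom q (n + 1) (k + 1) = q ^ (n - k) * gaussBinom q n k + gaussBinom q n (k + 1) := by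
  induction n generalizing k with
  | zero => cases k <;> simp [gaussBinom]
  | succ n ih =>
    rcases k with _ | k
    · calc gaussBinom q (n + 2) 1 = 1 + q * (q ^ n + gaussBinom q n 1) := by
            rw [gaussBinom_succ_succ, ih 0]
            simp
        _ = q ^ (n + 1) + (1 + q ^ 1 * gaussBinom q n 1) := by ring
        _ = q ^ (n + 1) * gaussBinom q (n + 1) 0 + gaussBinom q (n + 1) 1 := by
            rw [gaussBinom_succ_succ, gaussBinom_zero_right, gaussBinom_zero_right, mul_one]
    · have hpow : q ^ (k + 2 + (n - (k + 1))) * gaussBinom q n (k + 1) =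
          q ^ (n - k + (k + 1)) * gaussBinom q n (k + 1) :=
        pow_mul_gaussBinom_congr q (by omega)
      calc gaussBinom q (n + 2) (k + 2)
          = (q ^ (n - k) * gaussBinom q n k + gaussBinom q n (k + 1)) +
              q ^ (k + 2) * (q ^ (n - (k + 1)) * gaussBinom q n (k + 1) +
                gaussBinom q n (k + 2)) := by
            rw [gaussBinom_succ_succ, ih k, ih (k + 1)]
        _ = q ^ (n - k) * (gaussBinom q n k + q ^ (k + 1) * gaussBinom q n (k + 1)) +
              (gaussBinom q n (k + 1) + q ^ (k + 2) * gaussBinom q n (k + 2)) := by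
            rw [mul_add (q ^ (k + 2)), ← mul_assoc, ← pow_add, hpow]
            ring
        _ = _ := by
            rw [← gaussBinom_succ_succ, ← gaussBinom_succ_succ, Nat.add_sub_add_right]

end CommSemiring

variable {R : Type*} [CommRing R] (q : R)

/-- The finite `q`-Pochhammer product `(q; q)_n = (1 - q) (1 - q ^ 2) ⋯ (1 - q ^ n)`. -/
def qPochhammer (n : ℕ) : R :=
  ∏ i ∈ Finset.range n, (1 - q ^ (i + 1))

@[simp]
lemma qPochhammer_zero : qPochhammer q 0 = 1 :=
  Finset.prod_range_zero _

lemma qPochhammer_succ (n : ℕ) : qPochhammer q (n + 1) = qPochhammer q n * (1 - q ^ (n + 1)) :=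
  Finset.prod_range_succ _ n

lemma qPochhammer_mul_qPochhammer_mul_gaussBinom (a b : ℕ) :
    qPochhammer q a * qPochhammer q b * gaussBinom q (a + b) a = qPochhammer q (a + b) := by
  induction a generalizing b with
  | zero => simp
  | succ a iha =>
    induction b with
    | zero => simp [gaussBinom_self]
    | succ b ihb =>
      have hab : a + 1 + b = a + (b + 1) := by ring
      have hsum := iha (b + 1)
      rw [hab] at ihb
      rw [show a + 1 + (b + 1) = a + (b + 1) + 1 by ring, gaussBinom_succ_succ]
      calc qPochhammer q (a + 1) * qPochhammer q (b + 1) *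
            (gaussBinom q (a + (b + 1)) a + q ^ (a + 1) * gaussBinom q (a + (b + 1)) (a + 1))
          = (1 - q ^ (a + 1)) *
                (qPochhammer q a * qPochhammer q (b + 1) * gaussBinom q (a + (b + 1)) a) +
              q ^ (a + 1) * (1 - q ^ (b + 1)) *
                (qPochhammer q (a + 1) * qPochhammer q b * gaussBinom q (a + (b + 1)) (a + 1)) := by
            rw [qPochhammer_succ q a, qPochhammer_succ q b]
            ring
        _ = qPochhammer q (a + (b + 1) + 1) := by
            rw [hsum, ihb, qPochhammer_succ q (a + (b + 1))]
            ring

end GaussianBinomial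

section TripleProduct

/-- The generalized triangular number `k (k - 1) / 2` of an integer `k`, which is never negative. -/
def triangular (k : ℤ) : ℕ :=
  (k * (k - 1) / 2).toNat

lemma two_mul_triangular (k : ℤ) : 2 * (triangular k : ℤ) = k * (k - 1) := by
  have hnonneg : 0 ≤ k * (k - 1) := by
    rcases le_or_gt k 0 with h | h <;> nlinarith
  rw [triangular, Int.toNat_of_nonneg (Int.ediv_nonneg hnonneg zero_le_two),
    Int.mul_ediv_cancel' (Int.even_mul_pred_self k).two_dvd]

lemma triangular_add_one (k : ℤ) : (triangular (k + 1) : ℤ) = triangular k + k := by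
  linarith [two_mul_triangular k, two_mul_triangular (k + 1)]

lemma triangular_one_sub (k : ℤ) : triangular (1 - k) = triangular k := by
  have := two_mul_triangular (1 - k)
  zify
  linarith [two_mul_triangular k]

lemma natAbs_sub_one_le_triangular (k : ℤ) : k.natAbs - 1 ≤ triangular k := by
  have hk := two_mul_triangular k
  suffices k.natAbs ≤ triangular k + 1 by omega
  zify
  rcases le_or_gt k 0 with h | h
  · rw [abs_of_nonpos h]
    nlinarith
  · rw [abs_of_pos h]
    nlinarith

variable {R : Type*} [CommRing R] (q : R)

open Polynomial

/-- MacMahon's finite form of Jacobi's triple product, as a polynomial in the variable `X`. -/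
noncomputable def tripleProduct (m n : ℕ) : R[X] :=
  (∏ i ∈ Finset.range m, (X + C (q ^ (i + 1)))) * ∏ i ∈ Finset.range n, (1 + C (q ^ i) * X)

lemma tripleProduct_succ_left (m n : ℕ) :
    tripleProduct q (m + 1) n = tripleProduct q m n * (X + C (q ^ (m + 1))) := by
  rw [tripleProduct, Finset.prod_range_succ, mul_right_comm, tripleProduct]

lemma tripleProduct_succ_right (m n : ℕ) :
    tripleProduct q m (n + 1) = tripleProduct q m n * (1 + C (q ^ n) * X) := by
  rw [tripleProduct, Finset.prod_range_succ, ← mul_assoc, tripleProduct]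

theorem coeff_tripleProduct_zero_left (n k : ℕ) :
    (tripleProduct q 0 n).coeff k = q ^ triangular k * gaussBinom q n k := by
  induction n generalizing k with
  | zero =>
    rcases k with _ | k
    · simp [tripleProduct, triangular]
    · simp [tripleProduct, gaussBinom, coeff_one]
  | succ n ih =>
    rw [tripleProduct_succ_right, mul_add, mul_one, coeff_add, ← mul_assoc]
    rcases k with _ | k
    · simp [ih]
    · have htri := triangular_add_one k
      have hpow : q ^ (triangular k + n) * gaussBinom q n k =
          q ^ (triangular (k + 1) + (n - k)) * gaussBinom q n k :=
        pow_mul_gaussBinom_congr q (by omega)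
      rw [coeff_mul_X, coeff_mul_C, ih, ih, gaussBinom_succ_succ', Nat.cast_succ, mul_add,
        ← mul_assoc, ← pow_add, ← hpow, pow_add]
      ring

theorem coeff_tripleProduct (m n k : ℕ) :
    (tripleProduct q m n).coeff k = q ^ triangular (k - m) * gaussBinom q (m + n) k := by
  induction m generalizing k with
  | zero => simpa using coeff_tripleProduct_zero_left q n k
  | succ m ih =>
    rw [tripleProduct_succ_left, mul_add, coeff_add, coeff_mul_C, ih, Nat.add_right_comm m 1 n]
    rcases k with _ | k
    · have hexp : triangular ((0 : ℕ) - (m + 1 : ℕ)) = triangular ((0 : ℕ) - m) + (m + 1) := by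
        have := triangular_add_one ((0 : ℕ) - (m + 1 : ℕ))
        rw [show ((0 : ℕ) : ℤ) - (m + 1 : ℕ) + 1 = (0 : ℕ) - m by push_cast; ring] at this
        omega
      simp only [mul_coeff_zero, coeff_X_zero, mul_zero, zero_add, gaussBinom_zero_right, mul_one]
      rw [hexp, ← pow_add]
    · have hexp : triangular ((k + 1 : ℕ) - m) + (m + 1) = triangular (k - m) + (k + 1) := by
        have := triangular_add_one ((k : ℤ) - m)
        rw [show (k : ℤ) - m + 1 = (k + 1 : ℕ) - m by push_cast; ring] at this
        omega
      rw [coeff_mul_X, ih, gaussBinom_succ_succ, mul_right_comm, ← pow_add, hexp, pow_add,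
        show ((k + 1 : ℕ) : ℤ) - (m + 1 : ℕ) = k - m by push_cast; ring]
      ring

lemma natDegree_tripleProduct_le (m n : ℕ) : (tripleProduct q m n).natDegree ≤ m + n :=
  natDegree_le_iff_coeff_eq_zero.mpr fun k hk => by
    rw [coeff_tripleProduct, gaussBinom_eq_zero_of_lt q hk, mul_zero]

lemma sum_range_affine_mul_coeff_mul_pow (p : R[X]) {N : ℕ} (hN : p.natDegree < N) (a b x : R) :
    ∑ i ∈ Finset.range N, (a + b * i) * (p.coeff i * x ^ i) =
      a * p.eval x + b * x * (derivative p).eval x := by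
  rw [eval_eq_sum_range' hN, derivative_eval, sum_over_range' p (fun n => by simp) N hN,
    Finset.mul_sum, Finset.mul_sum, ← Finset.sum_add_distrib]
  refine Finset.sum_congr rfl fun i _ => ?_
  rcases i with _ | i
  · simp
  · rw [Nat.add_sub_cancel]
    ring

lemma tripleProduct_self_add_one (m : ℕ) :
    tripleProduct q m (m + 1) =
      (1 + X) * ∏ i ∈ Finset.range m, (X + C (q ^ (i + 1))) * (1 + C (q ^ (i + 1)) * X) := by
  rw [tripleProduct, Finset.prod_range_succ', Finset.prod_mul_distrib, pow_zero, C_1, one_mul]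
  ring

lemma eval_neg_one_tripleProduct_self_add_one (m : ℕ) :
    (tripleProduct q m (m + 1)).eval (-1) = 0 := by
  simp [tripleProduct_self_add_one]

lemma eval_neg_one_derivative_tripleProduct_self_add_one (m : ℕ) :
    (derivative (tripleProduct q m (m + 1))).eval (-1) = (-1) ^ m * qPochhammer q m ^ 2 := by
  have hfactor (i : ℕ) : eval (-1) ((X + C (q ^ (i + 1))) * (1 + C (q ^ (i + 1)) * X)) =
      -1 * (1 - q ^ (i + 1)) ^ 2 := by
    simp only [eval_mul, eval_add, eval_X, eval_C, eval_one]
    ring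
  rw [tripleProduct_self_add_one, derivative_mul, eval_add, eval_mul, eval_mul, eval_prod,
    Finset.prod_congr rfl fun i _ => hfactor i, Finset.prod_mul_distrib, Finset.prod_pow,
    Finset.prod_const, Finset.card_range]
  simp [qPochhammer]

end TripleProduct

section FiniteJacobi

variable {K : Type*} [Field K] (q : K)

/-- The general term `(-1) ^ k (1 - 2 k) q ^ (k (k - 1) / 2)` of the two-sided series in Jacobi's
identity for the cube of the Euler product. -/
def jacobiTerm (k : ℤ) : K :=
  (-1) ^ k * (1 - 2 * k) * q ^ triangular k

lemma sum_Icc_neg_eq_sum_range {M : Type*} [AddCommMonoid M] (f : ℤ → M) (n : ℕ) :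
    ∑ k ∈ Finset.Icc (-n : ℤ) (n + 1), f k = ∑ i ∈ Finset.range (2 * n + 2), f (i - n) :=
  Finset.sum_nbij' (fun k => (n + k).toNat) (fun i => i - n)
    (by simp; omega) (by simp; omega) (by simp; omega) (by simp)
    fun k hk => congrArg f (by simp at hk; omega)

theorem sum_jacobiTerm_mul_gaussBinom (n : ℕ) :
    ∑ k ∈ Finset.Icc (-n : ℤ) (n + 1), jacobiTerm q k * gaussBinom q (2 * n + 1) (n + k).toNat =
      2 * qPochhammer q n ^ 2 := by
  have hdeg : (tripleProduct q n (n + 1)).natDegree < 2 * n + 2 :=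
    (natDegree_tripleProduct_le q n (n + 1)).trans_lt (by omega)
  calc _ = (-1) ^ n * ∑ i ∈ Finset.range (2 * n + 2), ((1 + 2 * n : K) + -2 * i) *
          ((tripleProduct q n (n + 1)).coeff i * (-1) ^ i) := by
        rw [sum_Icc_neg_eq_sum_range, Finset.mul_sum]
        refine Finset.sum_congr rfl fun i _ => ?_
        have hsign : (-1 : K) ^ ((i : ℤ) - n) = (-1) ^ n * (-1) ^ i := by
          rw [zpow_sub₀ (by simp), zpow_natCast, zpow_natCast, div_eq_mul_inv, ← inv_pow,
            inv_neg_one, mul_comm]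
        rw [coeff_tripleProduct, jacobiTerm, hsign, add_sub_cancel, Int.toNat_natCast,
          show n + (n + 1) = 2 * n + 1 by ring]
        push_cast
        ring
    _ = (-1) ^ n * (-1) ^ n * (2 * qPochhammer q n ^ 2) := by
        rw [sum_range_affine_mul_coeff_mul_pow _ hdeg, eval_neg_one_tripleProduct_self_add_one,
          eval_neg_one_derivative_tripleProduct_self_add_one]
        ring
    _ = 2 * qPochhammer q n ^ 2 := by
        rw [← mul_pow, neg_one_mul, neg_neg, one_pow, one_mul]

end FiniteJacobi

section EulerProduct

variable {𝕜 : Type*} [NormedField 𝕜] {q : 𝕜}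

lemma one_sub_pow_succ_ne_zero (hq : ‖q‖ < 1) (n : ℕ) : 1 - q ^ (n + 1) ≠ 0 := by
  refine sub_ne_zero.mpr fun h => (pow_lt_one₀ (norm_nonneg q) hq n.succ_ne_zero).ne ?_
  rw [← norm_pow, ← h, norm_one]

lemma qPochhammer_ne_zero (hq : ‖q‖ < 1) (n : ℕ) : qPochhammer q n ≠ 0 :=
  Finset.prod_ne_zero_iff.mpr fun i _ => one_sub_pow_succ_ne_zero hq i

lemma gaussBinom_add_left (hq : ‖q‖ < 1) (a b : ℕ) :
    gaussBinom q (a + b) a = qPochhammer q (a + b) / (qPochhammer q a * qPochhammer q b) := by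
  rw [eq_div_iff (mul_ne_zero (qPochhammer_ne_zero hq a) (qPochhammer_ne_zero hq b)), mul_comm,
    qPochhammer_mul_qPochhammer_mul_gaussBinom]

/-- The Euler product `(q; q)_∞ = ∏ (1 - q ^ i)` over `i ≥ 1`. -/
noncomputable def qPochhammerInf (q : 𝕜) : 𝕜 :=
  ∏' i : ℕ, (1 - q ^ (i + 1))

lemma summable_norm_neg_pow_succ (hq : ‖q‖ < 1) : Summable fun i : ℕ => ‖-q ^ (i + 1)‖ := by
  simpa only [norm_neg, norm_pow] using
    (summable_nat_add_iff 1).mpr (summable_geometric_of_lt_one (norm_nonneg q) hq)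

variable [CompleteSpace 𝕜]

lemma qPochhammerInf_ne_zero (hq : ‖q‖ < 1) : qPochhammerInf q ≠ 0 := by
  simp only [qPochhammerInf, sub_eq_add_neg]
  refine tprod_one_add_ne_zero_of_summable (fun i => ?_) (summable_norm_neg_pow_succ hq)
  rw [← sub_eq_add_neg]
  exact one_sub_pow_succ_ne_zero hq i

lemma tendsto_qPochhammer (hq : ‖q‖ < 1) :
    Tendsto (qPochhammer q) atTop (𝓝 (qPochhammerInf q)) := by
  have hprod : Multipliable fun i : ℕ => 1 + -q ^ (i + 1) :=
    multipliable_one_add_of_summable (summable_norm_neg_pow_succ hq)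
  simp only [← sub_eq_add_neg] at hprod
  exact hprod.hasProd.tendsto_prod_nat

lemma tendsto_gaussBinom_add_left (hq : ‖q‖ < 1) {α : Type*} {l : Filter α} {a b : α → ℕ}
    (ha : Tendsto a l atTop) (hb : Tendsto b l atTop) :
    Tendsto (fun x => gaussBinom q (a x + b x) (a x)) l (𝓝 (qPochhammerInf q)⁻¹) := by
  have hL := qPochhammerInf_ne_zero hq
  have hlim := tendsto_qPochhammer hq
  have hab : Tendsto (fun x => a x + b x) l atTop := ha.atTop_add_nonneg fun _ => Nat.zero_le _
  have := (hlim.comp hab).div ((hlim.comp ha).mul (hlim.comp hb)) (mul_ne_zero hL hL)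
  rw [div_mul_cancel_left₀ hL] at this
  exact this.congr fun x => (gaussBinom_add_left hq _ _).symm

lemma tendsto_gaussBinom_two_mul_add_one (hq : ‖q‖ < 1) (k : ℤ) :
    Tendsto (fun n : ℕ => gaussBinom q (2 * n + 1) (n + k).toNat) atTop
      (𝓝 (qPochhammerInf q)⁻¹) := by
  have ha : Tendsto (fun n : ℕ => (n + k).toNat) atTop atTop :=
    tendsto_atTop_mono (fun n => by omega) (tendsto_sub_atTop_nat k.natAbs)
  have hb : Tendsto (fun n : ℕ => (n + 1 - k).toNat) atTop atTop :=
    tendsto_atTop_mono (fun n => by omega) (tendsto_sub_atTop_nat k.natAbs)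
  refine (tendsto_gaussBinom_add_left hq ha hb).congr' ?_
  filter_upwards [eventually_ge_atTop k.natAbs] with n hn
  rw [show (n + k).toNat + (n + 1 - k).toNat = 2 * n + 1 by omega]

lemma exists_norm_gaussBinom_le (hq : ‖q‖ < 1) : ∃ C, ∀ n k, ‖gaussBinom q n k‖ ≤ C := by
  have hlim := tendsto_qPochhammer hq
  obtain ⟨A, hA⟩ := (hlim.norm).bddAbove_range
  obtain ⟨B, hB⟩ := (hlim.inv₀ (qPochhammerInf_ne_zero hq)).norm.bddAbove_range
  rw [mem_upperBounds, Set.forall_mem_range] at hA hB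
  have hA₀ : 0 ≤ A := (norm_nonneg _).trans (hA 0)
  have hB₀ : 0 ≤ B := (norm_nonneg _).trans (hB 0)
  refine ⟨A * (B * B), fun n k => ?_⟩
  rcases lt_or_ge n k with h | h
  · rw [gaussBinom_eq_zero_of_lt q h, norm_zero]
    positivity
  · obtain ⟨b, rfl⟩ := Nat.exists_eq_add_of_le h
    rw [gaussBinom_add_left hq, div_eq_mul_inv, mul_inv, norm_mul, norm_mul]
    gcongr
    exacts [hA _, hB _, hB _]

end EulerProduct

section JacobiSeries

variable {𝕜 : Type*} [NormedField 𝕜] {q : 𝕜}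

lemma norm_jacobiTerm_le (hq : ‖q‖ < 1) (k : ℤ) :
    ‖jacobiTerm q k‖ ≤ (2 * k.natAbs + 1) * ‖q‖ ^ (k.natAbs - 1) := by
  have hlin : ‖(1 - 2 * k : 𝕜)‖ ≤ 2 * k.natAbs + 1 := by
    have hnat (n : ℕ) : ‖(n : 𝕜)‖ ≤ n := by simpa using Nat.norm_cast_le (α := 𝕜) n
    have hint : ‖(k : 𝕜)‖ ≤ k.natAbs := by
      rcases k.natAbs_eq with h | h <;> rw [h] <;> simpa using hnat k.natAbs
    calc ‖(1 - 2 * k : 𝕜)‖ ≤ 1 + 2 * k.natAbs := by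
          refine (norm_sub_le _ _).trans ?_
          rw [norm_one, norm_mul]
          gcongr
          exact hnat 2
      _ = 2 * k.natAbs + 1 := add_comm _ _
  rw [jacobiTerm, norm_mul, norm_mul, norm_zpow, norm_neg, norm_one, one_zpow, one_mul, norm_pow]
  exact mul_le_mul hlin
    (pow_le_pow_of_le_one (norm_nonneg q) hq.le (natAbs_sub_one_le_triangular k))
    (by positivity) (by positivity)

lemma summable_norm_jacobiTerm (hq : ‖q‖ < 1) : Summable fun k => ‖jacobiTerm q k‖ := by
  have hnat : Summable fun n : ℕ => (2 * n + 1 : ℝ) * ‖q‖ ^ (n - 1) := by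
    rw [← summable_nat_add_iff 1]
    have hgeom (d : ℕ) := summable_pow_mul_geometric_of_norm_lt_one (R := ℝ) d (r := ‖q‖) (by simpa)
    refine (((hgeom 1).mul_left 2).add ((hgeom 0).mul_left 3)).congr fun n => ?_
    rw [Nat.add_sub_cancel, Nat.cast_succ]
    ring
  refine .of_nonneg_of_le (fun k => norm_nonneg _) (norm_jacobiTerm_le hq) ?_
  exact .of_nat_of_neg (by simpa using hnat) (by simpa using hnat)

lemma tendsto_sum_mul_of_summable_norm {α ι R : Type*} [NormedRing R] [CompleteSpace R]
    {l : Filter α} {f : ι → R} (hf : Summable fun k => ‖f k‖) {s : α → Finset ι}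
    (hs : Tendsto s l atTop) {w : α → ι → R} {L : R} (hw : ∀ k, Tendsto (fun x => w x k) l (𝓝 L))
    {C : ℝ} (hC : ∀ x k, ‖w x k‖ ≤ C) :
    Tendsto (fun x => ∑ k ∈ s x, f k * w x k) l (𝓝 ((∑' k, f k) * L)) := by
  have hsum (x : α) :
      ∑ k ∈ s x, f k * w x k = ∑' k, (s x : Set ι).indicator (fun k => f k * w x k) k :=
    sum_eq_tsum_indicator _ _
  have hmem (k : ι) : ∀ᶠ x in l, k ∈ s x :=
    (hs.eventually_ge_atTop {k}).mono fun x hx => hx (Finset.mem_singleton_self k)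
  simp only [hsum]
  rw [← hf.of_norm.tsum_mul_right]
  refine tendsto_tsum_of_dominated_convergence (hf.mul_right C) (fun k => ?_)
    (.of_forall fun x k => ?_)
  · refine ((hw k).const_mul (f k)).congr' ((hmem k).mono fun x hx => ?_)
    exact (Set.indicator_of_mem (Finset.mem_coe.mpr hx) fun k => f k * w x k).symm
  · calc _ ≤ ‖f k * w x k‖ := norm_indicator_le_norm_self (fun k => f k * w x k) k
      _ ≤ ‖f k‖ * ‖w x k‖ := norm_mul_le _ _
      _ ≤ ‖f k‖ * C := by gcongr; exact hC x k

lemma tendsto_Icc_neg_add_one :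
    Tendsto (fun n : ℕ => Finset.Icc (-n : ℤ) (n + 1)) atTop atTop := by
  refine tendsto_atTop_mono (fun n => ?_) Finset.tendsto_Icc_neg
  exact Finset.Icc_subset_Icc_right (by omega)

variable [CompleteSpace 𝕜]

theorem tsum_jacobiTerm (hq : ‖q‖ < 1) : ∑' k, jacobiTerm q k = 2 * qPochhammerInf q ^ 3 := by
  have hL := qPochhammerInf_ne_zero hq
  obtain ⟨C, hC⟩ := exists_norm_gaussBinom_le hq
  have hbound (n : ℕ) (k : ℤ) : ‖gaussBinom q (2 * n + 1) (n + k).toNat‖ ≤ C := hC _ _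
  have hseries := tendsto_sum_mul_of_summable_norm (f := jacobiTerm q)
    (summable_norm_jacobiTerm hq) tendsto_Icc_neg_add_one
    (tendsto_gaussBinom_two_mul_add_one hq) hbound
  simp only [sum_jacobiTerm_mul_gaussBinom] at hseries
  have hlim := tendsto_nhds_unique hseries (((tendsto_qPochhammer hq).pow 2).const_mul 2)
  rw [mul_inv_eq_iff_eq_mul₀ hL] at hlim
  rw [hlim]
  ring

end JacobiSeries

section CentralCoefficients

lemma add_one_mul_catalan_eq_choose (n : ℕ) : (2 * n + 1) * catalan n = (2 * n + 1).choose n := by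
  refine Nat.eq_of_mul_eq_mul_left n.succ_pos ?_
  rw [mul_left_comm, succ_mul_catalan_eq_centralBinom, Nat.centralBinom_eq_two_mul_choose,
    Nat.add_one_mul_choose_eq, Nat.choose_symm_half, mul_comm]

lemma catalan_pos (n : ℕ) : 0 < catalan n :=
  Nat.pos_of_mul_pos_left (succ_mul_catalan_eq_centralBinom n ▸ Nat.centralBinom_pos n)

lemma catalan_le_four_pow (n : ℕ) : catalan n ≤ 4 ^ n :=
  calc catalan n ≤ (n + 1) * catalan n := Nat.le_mul_of_pos_left _ n.succ_pos
    _ = n.centralBinom := succ_mul_catalan_eq_centralBinom n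
    _ ≤ 4 ^ n := Nat.centralBinom_le_four_pow n

lemma four_pow_le_mul_catalan {n : ℕ} (hn : 0 < n) : 4 ^ n ≤ (2 * n) ^ 2 * catalan n :=
  calc 4 ^ n ≤ 2 * n * n.centralBinom := Nat.four_pow_le_two_mul_self_mul_centralBinom n hn
    _ = 2 * n * (n + 1) * catalan n := by rw [← succ_mul_catalan_eq_centralBinom, mul_assoc (2 * n)]
    _ ≤ (2 * n) ^ 2 * catalan n := by
      rw [sq]
      gcongr
      omega

theorem tendsto_catalan_rpow_two :
    Tendsto (fun n : ℕ => (catalan n : ℝ) ^ ((1 : ℝ) / (2 * n))) atTop (𝓝 2) := by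
  have hfour {n : ℕ} (hn : 0 < n) : ((4 : ℝ) ^ n) ^ ((1 : ℝ) / (2 * n)) = 2 := by
    rw [show (4 : ℝ) ^ n = 2 ^ (2 * n) by rw [pow_mul]; norm_num, one_div]
    exact_mod_cast Real.pow_rpow_inv_natCast zero_le_two (by positivity : 2 * n ≠ 0)
  have hlower : Tendsto (fun n : ℕ => 2 / (((2 * n : ℝ) ^ ((1 : ℝ) / (2 * n))) ^ 2)) atTop
      (𝓝 2) := by
    have h2n : Tendsto (fun n : ℕ => (2 * n : ℝ)) atTop atTop :=
      tendsto_natCast_atTop_atTop.const_mul_atTop zero_lt_two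
    have hdiv := tendsto_const_nhds (x := (2 : ℝ)).div ((tendsto_rpow_div.comp h2n).pow 2)
      (pow_ne_zero 2 one_ne_zero)
    rwa [one_pow, div_one] at hdiv
  refine tendsto_of_tendsto_of_tendsto_of_le_of_le' hlower tendsto_const_nhds ?_ ?_ <;>
    filter_upwards [eventually_gt_atTop 0] with n hn
  · rw [div_le_iff₀' (by positivity)]
    calc (2 : ℝ) = (4 ^ n) ^ ((1 : ℝ) / (2 * n)) := (hfour hn).symm
      _ ≤ ((2 * n) ^ 2 * catalan n) ^ ((1 : ℝ) / (2 * n)) := by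
        refine Real.rpow_le_rpow (by positivity) ?_ (by positivity)
        exact_mod_cast four_pow_le_mul_catalan hn
      _ = ((2 * n) ^ ((1 : ℝ) / (2 * n))) ^ 2 * catalan n ^ ((1 : ℝ) / (2 * n)) := by
        rw [Real.mul_rpow (by positivity) (by positivity), Real.rpow_pow_comm (by positivity)]
  · calc (catalan n : ℝ) ^ ((1 : ℝ) / (2 * n)) ≤ (4 ^ n) ^ ((1 : ℝ) / (2 * n)) := by
          refine Real.rpow_le_rpow (by positivity) ?_ (by positivity)
          exact_mod_cast catalan_le_four_pow n
      _ = 2 := hfour hn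

variable (𝕜 : Type*) [RCLike 𝕜]

lemma tendsto_choose_add_div_choose (k : ℕ) :
    Tendsto (fun n : ℕ => ((2 * n + 1).choose (n + k) / (2 * n + 1).choose n : 𝕜)) atTop
      (𝓝 1) := by
  induction k with
  | zero =>
    refine tendsto_const_nhds.congr fun n => (div_self ?_).symm
    exact_mod_cast (Nat.choose_pos (by omega)).ne'
  | succ k ih =>
    have hratio : Tendsto (fun n : ℕ => ((1 - k + 1 * n) / (k + 1 + 1 * n) : 𝕜)) atTop
        (𝓝 (1 / 1)) := tendsto_add_mul_div_add_mul_atTop_nhds _ _ _ one_ne_zero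
    have hmul := ih.mul hratio
    rw [div_one, mul_one] at hmul
    refine hmul.congr' ?_
    filter_upwards [eventually_ge_atTop k] with n hn
    have hne : (k + 1 + 1 * n : 𝕜) ≠ 0 := by
      rw [one_mul]
      exact_mod_cast (by omega : k + 1 + n ≠ 0)
    have hstep := congrArg (Nat.cast (R := 𝕜)) (Nat.choose_succ_right_eq (2 * n + 1) (n + k))
    rw [show 2 * n + 1 - (n + k) = n + 1 - k by omega, Nat.cast_mul, Nat.cast_mul,
      Nat.cast_sub (by omega)] at hstep
    push_cast at hstep
    rw [← add_assoc, div_mul_div_comm, mul_comm (_ : 𝕜) (k + 1 + 1 * n), ← div_div]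
    congr 1
    rw [div_eq_iff hne]
    linear_combination -hstep

lemma tendsto_choose_div_choose (k : ℤ) :
    Tendsto (fun n : ℕ => ((2 * n + 1).choose (n + k).toNat / (2 * n + 1).choose n : 𝕜)) atTop
      (𝓝 1) := by
  rcases le_or_gt 0 k with hk | hk
  · lift k to ℕ using hk
    exact_mod_cast tendsto_choose_add_div_choose 𝕜 k
  · refine (tendsto_choose_add_div_choose 𝕜 (1 - k).toNat).congr' ?_
    filter_upwards [eventually_ge_atTop k.natAbs] with n hn
    rw [Nat.choose_symm_of_eq_add (by omega : 2 * n + 1 = n + (1 - k).toNat + (n + k).toNat)]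

lemma norm_choose_div_choose_le_one (n k : ℕ) :
    ‖((2 * n + 1).choose k / (2 * n + 1).choose n : 𝕜)‖ ≤ 1 := by
  rw [norm_div, RCLike.norm_natCast, RCLike.norm_natCast]
  refine div_le_one_of_le₀ ?_ (by positivity)
  have hmiddle := Nat.choose_le_middle k (2 * n + 1)
  rw [show (2 * n + 1) / 2 = n by omega] at hmiddle
  exact_mod_cast hmiddle

end CentralCoefficients

section TouchardSum

lemma sum_Icc_neg_add_one_eq_zero {M : Type*} [AddCommMonoid M] {n : ℕ} {f : ℤ → M}
    (hf : ∀ k ∈ Finset.Icc (-n : ℤ) (n + 1), f k + f (1 - k) = 0) :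
    ∑ k ∈ Finset.Icc (-n : ℤ) (n + 1), f k = 0 :=
  Finset.sum_involution (fun k _ => 1 - k) hf (fun k _ _ => by omega)
    (fun k hk => by rw [Finset.mem_Icc] at hk ⊢; omega) fun k _ => sub_sub_cancel 1 k

lemma sum_neg_one_zpow_mul_pow_triangular_mul_choose {R : Type*} [DivisionRing R] (q : R) (n : ℕ) :
    ∑ k ∈ Finset.Icc (-n : ℤ) (n + 1),
      (-1) ^ k * q ^ triangular k * ((2 * n + 1).choose (n + k).toNat : R) = 0 := by
  refine sum_Icc_neg_add_one_eq_zero fun k hk => ?_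
  rw [Finset.mem_Icc] at hk
  rw [triangular_one_sub, zpow_sub₀ (by simp), zpow_one, div_eq_mul_inv, ← inv_zpow, inv_neg_one,
    Nat.choose_symm_of_eq_add (by omega : 2 * n + 1 = (n + (1 - k)).toNat + (n + k).toNat)]
  simp

lemma add_one_mul_choose_toNat {n : ℕ} {k : ℤ} (hk : k ∈ Finset.Icc (-n : ℤ) (n + 1)) :
    ((2 * n + 1) * (2 * n).choose (n + k).toNat : ℤ) =
      (n + 1 - k) * (2 * n + 1).choose (n + k).toNat := by
  rw [Finset.mem_Icc] at hk
  have h := congrArg (Nat.cast (R := ℤ)) (Nat.choose_mul_succ_eq (2 * n) (n + k).toNat)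
  rw [Nat.cast_mul, Nat.cast_mul,
    show ((2 * n + 1 - (n + k).toNat : ℕ) : ℤ) = n + 1 - k by omega] at h
  push_cast at h
  linarith

variable (q : ℂ)

lemma touchardSum_eq_sum_Icc_neg_add_one (n : ℕ) :
    touchardSum n q = ∑ k ∈ Finset.Icc (-n : ℤ) (n + 1),
      (-1) ^ k * q ^ triangular k * ((2 * n).choose (n + k).toNat : ℂ) := by
  refine Finset.sum_subset (Finset.Icc_subset_Icc_right (by omega)) fun k hk hk' => ?_
  rw [Finset.mem_Icc] at hk hk'
  rw [Nat.choose_eq_zero_of_lt (by omega), Nat.cast_zero, mul_zero]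

theorem two_mul_touchardSum (n : ℕ) :
    2 * ((2 * n + 1) * touchardSum n q) =
      ∑ k ∈ Finset.Icc (-n : ℤ) (n + 1), jacobiTerm q k * (2 * n + 1).choose (n + k).toNat :=
  calc 2 * ((2 * n + 1) * touchardSum n q)
      = ∑ k ∈ Finset.Icc (-n : ℤ) (n + 1),
          (jacobiTerm q k * (2 * n + 1).choose (n + k).toNat +
            (2 * n + 1) * ((-1) ^ k * q ^ triangular k * (2 * n + 1).choose (n + k).toNat)) := by
        rw [touchardSum_eq_sum_Icc_neg_add_one, Finset.mul_sum, Finset.mul_sum]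
        refine Finset.sum_congr rfl fun k hk => ?_
        have hchoose := congrArg (Int.cast (R := ℂ)) (add_one_mul_choose_toNat hk)
        push_cast at hchoose
        rw [jacobiTerm]
        linear_combination 2 * (-1) ^ k * q ^ triangular k * hchoose
    _ = _ := by
        rw [Finset.sum_add_distrib, ← Finset.mul_sum,
          sum_neg_one_zpow_mul_pow_triangular_mul_choose, mul_zero, add_zero]

lemma touchardSum_div_catalan (n : ℕ) :
    touchardSum n q / catalan n = (∑ k ∈ Finset.Icc (-n : ℤ) (n + 1),
      jacobiTerm q k * ((2 * n + 1).choose (n + k).toNat / (2 * n + 1).choose n)) / 2 := by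
  have hcatalan : (catalan n : ℂ) ≠ 0 := Nat.cast_ne_zero.mpr (catalan_pos n).ne'
  have hn : (2 * n + 1 : ℂ) ≠ 0 := mod_cast (2 * n).succ_ne_zero
  simp_rw [← mul_div_assoc]
  rw [← Finset.sum_div, ← two_mul_touchardSum, ← add_one_mul_catalan_eq_choose]
  push_cast
  field_simp

variable {q} in
theorem tendsto_touchardSum_div_catalan (hq : ‖q‖ < 1) :
    Tendsto (fun n => touchardSum n q / catalan n) atTop (𝓝 (qPochhammerInf q ^ 3)) := by
  have hseries := tendsto_sum_mul_of_summable_norm (f := jacobiTerm q)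
    (summable_norm_jacobiTerm hq) tendsto_Icc_neg_add_one (tendsto_choose_div_choose ℂ)
    fun n k => norm_choose_div_choose_le_one ℂ n (n + k).toNat
  simp only [touchardSum_div_catalan]
  convert hseries.div_const 2 using 2
  rw [tsum_jacobiTerm hq]
  ring

end TouchardSum

lemma tendsto_rpow_of_tendsto_div {α : Type*} {l : Filter α} {a b e : α → ℝ} {c L : ℝ}
    (ha : ∀ x, 0 ≤ a x) (hb : ∀ x, 0 < b x) (hc : c ≠ 0)
    (hab : Tendsto (fun x => a x / b x) l (𝓝 c)) (he : Tendsto e l (𝓝 0))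
    (hL : Tendsto (fun x => b x ^ e x) l (𝓝 L)) : Tendsto (fun x => a x ^ e x) l (𝓝 L) := by
  have hmul := (hab.rpow he (.inl hc)).mul hL
  rw [Real.rpow_zero, one_mul] at hmul
  refine hmul.congr fun x => ?_
  rw [← Real.mul_rpow (div_nonneg (ha x) (hb x).le) (hb x).le, div_mul_cancel₀ _ (hb x).ne']

/-- For every `q` in the open unit ball of `ℂ`,
`|∑_{k=-n}^n (-1)^k q^{k(k-1)/2} C(2n, n+k)|^{1/(2n)} → 2` as `n → ∞`. -/
theorem touchardSum_abs_rpow_tendsto_two (q : ℂ) (hq : ‖q‖ < 1) :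
    Filter.Tendsto (fun n : ℕ => ‖touchardSum n q‖ ^ ((1 : ℝ) / (2 * (n : ℝ))))
      Filter.atTop (nhds 2) := by
  have hlim : Tendsto (fun n => ‖touchardSum n q‖ / catalan n) atTop
      (𝓝 ‖qPochhammerInf q ^ 3‖) :=
    (tendsto_touchardSum_div_catalan hq).norm.congr fun n => by
      rw [norm_div, RCLike.norm_natCast]
  have hne : ‖qPochhammerInf q ^ 3‖ ≠ 0 :=
    norm_ne_zero_iff.mpr (pow_ne_zero 3 (qPochhammerInf_ne_zero hq))
  have hexponent : Tendsto (fun n : ℕ => (1 : ℝ) / (2 * n)) atTop (𝓝 0) :=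
    (tendsto_natCast_atTop_atTop.const_mul_atTop zero_lt_two).const_div_atTop 1
  exact tendsto_rpow_of_tendsto_div (fun n => norm_nonneg _)
    (fun n => Nat.cast_pos.mpr (catalan_pos n)) hne hlim hexponent tendsto_catalan_rpow_two
end

section
/- (Touchard–Riordan formula) For every n ≥ 1 and every q ∈ ℂ, (1−q)^n · ∑_{π a pairing on [2n]} q^{cr(π)} = ∑_{k=-n}^{n} (-1)^k q^{k(k-1)/2} C(2n, n+k); equivalently, (1−q)^n · T_n(q) = ∑_{k=-n}^{n} (-1)^k q^{k(k-1)/2} C(2n, n+k). -/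
open scoped Classical

/-!
Let `W m h` count, by crossings, the partial matchings of `m` points on a line with `h` points left
open, where a chord `{a, b}` and an open point `s` cross if `a < s < b`. The last point is either
open, crossing nothing, or matched to some `c`. In the latter case remove it and leave `c` open: the
crossings lost are those with the open points beyond `c`, and as `c` runs over the `h + 1` points
now open their number runs over `0, …, h`. Hence
`W (m + 1) h = W m (h - 1) + (1 + q + ⋯ + q ^ h) * W m (h + 1)`.

The recurrence can be solved explicitly: `(1 - q) ^ i * W (h + 2 * i) h` is the convolution of the
ballot numbers `C(h + 2i, k) - C(h + 2i, k - 1)` with the numbers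
`(-1)^j q^(j(j+1)/2) [h + j choose j]_q`. Pascal's rule for either factor turns this into the same
recurrence. For `h = 0` the Gaussian binomials are `1`, and pairing the indices `-j` and `j + 1` in
the Touchard sum produces the ballot numbers.
-/

namespace TouchardRiordan

open Finset

section FinsetSums

variable {α M : Type*}

lemma sum_powersetCard_sum_sdiff [DecidableEq α] [AddCommMonoid M] (s : Finset α) (k : ℕ)
    (f : Finset α → α → M) :
    ∑ t ∈ s.powersetCard k, ∑ a ∈ s \ t, f (insert a t) a =
      ∑ t ∈ s.powersetCard (k + 1), ∑ a ∈ t, f t a := by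
  rw [sum_sigma', sum_sigma']
  refine sum_bij' (fun p _ => ⟨insert p.2 p.1, p.2⟩) (fun p _ => ⟨p.1.erase p.2, p.2⟩)
    ?_ ?_ ?_ ?_ fun _ _ => rfl
  all_goals
    rintro ⟨t, a⟩ h
    simp only [mem_sigma, mem_powersetCard, mem_sdiff] at h
  · grind
  · grind
  · simp [erase_insert h.2.2]
  · simp [insert_erase h.2]

lemma sum_powersetCard_insert [DecidableEq α] [AddCommMonoid M] {s : Finset α} {a : α}
    (ha : a ∉ s) (k : ℕ) (f : Finset α → M) :
    ∑ t ∈ (insert a s).powersetCard (k + 1), f t =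
      ∑ t ∈ s.powersetCard (k + 1), f t + ∑ t ∈ s.powersetCard k, f (insert a t) := by
  have notMem {t : Finset α} {j : ℕ} (ht : t ∈ s.powersetCard j) : a ∉ t :=
    fun h => ha ((mem_powersetCard.1 ht).1 h)
  rw [powersetCard_succ_insert ha, sum_union, sum_image]
  · exact insert_erase_invOn.2.injOn.mono fun t ht => notMem (mem_coe.1 ht)
  · rw [disjoint_left]
    rintro _ ht hu
    obtain ⟨u, -, rfl⟩ := mem_image.1 hu
    exact notMem ht (mem_insert_self a u)

lemma sum_card_filter_gt [LinearOrder α] [AddCommMonoid M] (s : Finset α) (f : ℕ → M) :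
    ∑ a ∈ s, f #{b ∈ s | a < b} = ∑ i ∈ range #s, f i := by
  induction s using Finset.induction_on_min with
  | empty => simp
  | insert a s ha ih =>
    have has : a ∉ s := fun h => lt_irrefl a (ha a h)
    rw [sum_insert has, card_insert_of_notMem has, sum_range_succ, ← ih, add_comm]
    congr 1
    · refine sum_congr rfl fun c hc => ?_
      rw [filter_insert, if_neg (ha c hc).not_gt]
    · rw [filter_insert, if_neg (lt_irrefl a), filter_true_of_mem ha]

lemma sum_Icc_neg_add_sum_succ [AddCommGroup M] (f : ℤ → M) (n : ℕ) :
    ∑ k ∈ Icc (-n : ℤ) n, f k + f (n + 1) = ∑ j ∈ range (n + 1), (f (-j) + f (j + 1)) := by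
  induction n with
  | zero => simp
  | succ n ih =>
    rw [sum_range_succ, ← ih]
    push_cast
    rw [sum_Icc_succ_eq_add_endpoints]
    abel

end FinsetSums

section GaussianBinomials

/-- The Gaussian binomial coefficient `[h + j choose j]_q`. The arguments are the two sides of the
rectangle rather than its half-perimeter, so that no truncated subtraction is involved. -/
def gaussBinom {R : Type*} [CommSemiring R] (q : R) : ℕ → ℕ → R
  | _, 0 => 1
  | 0, _ + 1 => 1
  | h + 1, j + 1 => gaussBinom q h (j + 1) + q ^ (h + 1) * gaussBinom q (h + 1) j

section CommSemiring

variable {R : Type*} [CommSemiring R] (q : R)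

@[simp]
lemma gaussBinom_zero_right (h : ℕ) : gaussBinom q h 0 = 1 := by cases h <;> simp [gaussBinom]

@[simp]
lemma gaussBinom_zero_left (j : ℕ) : gaussBinom q 0 j = 1 := by cases j <;> simp [gaussBinom]

lemma gaussBinom_succ_succ (h j : ℕ) :
    gaussBinom q (h + 1) (j + 1) =
      gaussBinom q h (j + 1) + q ^ (h + 1) * gaussBinom q (h + 1) j := by
  rw [gaussBinom]

end CommSemiring

variable {R : Type*} [CommRing R] (q : R)

lemma one_sub_pow_mul_gaussBinom_succ_right (h j : ℕ) :
    (1 - q ^ (j + 1)) * gaussBinom q h (j + 1) = (1 - q ^ (h + j + 1)) * gaussBinom q h j := by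
  induction h generalizing j with
  | zero => simp
  | succ h ih =>
    induction j with
    | zero =>
      have := ih 0
      simp only [gaussBinom_zero_right, gaussBinom_succ_succ] at this ⊢
      linear_combination this
    | succ j ihj =>
      have pascal := gaussBinom_succ_succ q h j
      rw [gaussBinom_succ_succ q h (j + 1)]
      linear_combination ih (j + 1) + q ^ (h + 1) * ihj - (1 - q ^ (h + j + 2)) * pascal

lemma one_sub_pow_mul_gaussBinom_succ_left (h j : ℕ) :
    (1 - q ^ (h + 1)) * gaussBinom q (h + 1) j = (1 - q ^ (h + j + 1)) * gaussBinom q h j := by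
  cases j with
  | zero => simp
  | succ j =>
    have pascal := gaussBinom_succ_succ q h j
    linear_combination (1 - q ^ (h + j + 2)) * pascal -
      q ^ (h + 1) * one_sub_pow_mul_gaussBinom_succ_right q (h + 1) j

/-- The coefficient `(-1)^j q^(j(j+1)/2) [h + j choose j]_q` with which ballot numbers enter the
solution of the recurrence for partial matchings. -/
def signedGaussBinom (h j : ℕ) : R :=
  (-1) ^ j * q ^ (j + 1).choose 2 * gaussBinom q h j

@[simp]
lemma signedGaussBinom_zero_right (h : ℕ) : signedGaussBinom q h 0 = 1 := by
  simp [signedGaussBinom]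

lemma succ_succ_choose_two (j : ℕ) : (j + 1 + 1).choose 2 = (j + 1) + (j + 1).choose 2 := by
  rw [Nat.choose_succ_succ' (j + 1) 1, Nat.choose_one_right]

lemma signedGaussBinom_succ_add (h j : ℕ) :
    signedGaussBinom q (h + 1) (j + 1) + signedGaussBinom q (h + 1) j =
      signedGaussBinom q h (j + 1) + (1 - q ^ (h + 2)) * signedGaussBinom q (h + 2) j := by
  simp only [signedGaussBinom, succ_succ_choose_two, gaussBinom_succ_succ]
  linear_combination
    -(-1) ^ j * q ^ (j + 1).choose 2 * one_sub_pow_mul_gaussBinom_succ_left q (h + 1) j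

lemma signedGaussBinom_zero_succ_add (j : ℕ) :
    signedGaussBinom q 0 (j + 1) + signedGaussBinom q 0 j = (1 - q) * signedGaussBinom q 1 j := by
  have step := one_sub_pow_mul_gaussBinom_succ_left q 0 j
  simp only [gaussBinom_zero_left] at step
  simp only [signedGaussBinom, succ_succ_choose_two, gaussBinom_zero_left]
  linear_combination -(-1) ^ j * q ^ (j + 1).choose 2 * step

end GaussianBinomials

section BallotNumbers

/-- The ballot number `C(m, k) - C(m, k - 1)`, where `C(m, -1) = 0`. -/
def ballot (m : ℕ) : ℕ → ℤ
  | 0 => 1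
  | k + 1 => m.choose (k + 1) - m.choose k

@[simp]
lemma ballot_zero_right (m : ℕ) : ballot m 0 = 1 := rfl

lemma ballot_succ_succ (m k : ℕ) : ballot (m + 1) (k + 1) = ballot m (k + 1) + ballot m k := by
  cases k with
  | zero => simp [ballot]
  | succ k =>
    simp only [ballot, Nat.choose_succ_succ' m]
    push_cast
    ring

lemma ballot_eq_choose_sub_choose {m k : ℕ} (hk : k ≤ m) :
    ballot m k = m.choose k - m.choose (m + 1 - k) := by
  cases k with
  | zero => simp
  | succ k => rw [ballot, Nat.add_sub_add_right, Nat.choose_symm (by lia)]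

lemma ballot_half (i : ℕ) : ballot (2 * i + 1) (i + 1) = 0 := by
  rw [ballot, Nat.choose_symm_half, sub_self]

lemma sum_antidiagonal_ballot_succ {R : Type*} [CommRing R] (m i : ℕ) (f : ℕ → R) :
    ∑ p ∈ antidiagonal (i + 1), (ballot (m + 1) p.1 : R) * f p.2 =
      ballot m (i + 1) * f 0 + ∑ p ∈ antidiagonal i, (ballot m p.1 : R) * (f (p.2 + 1) + f p.2) :=
  calc ∑ p ∈ antidiagonal (i + 1), (ballot (m + 1) p.1 : R) * f p.2
    _ = ∑ p ∈ antidiagonal (i + 1), (ballot m p.1 : R) * f p.2 +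
          ∑ p ∈ antidiagonal i, (ballot m p.1 : R) * f p.2 := by
      simp only [Nat.sum_antidiagonal_succ, ballot_succ_succ, ballot_zero_right, Int.cast_add,
        add_mul, sum_add_distrib, add_assoc]
    _ = _ := by
      simp only [Nat.sum_antidiagonal_succ', mul_add, sum_add_distrib, add_assoc]

end BallotNumbers

section TouchardConvolution

variable {R : Type*} [CommRing R] (q : R)

/-- The closed form of `(1 - q) ^ i` times the generating function by crossings of the partial
matchings with `i` chords and `h` open points. -/
def touchardConv (i h : ℕ) : R :=
  ∑ p ∈ antidiagonal i, (ballot (h + 2 * i) p.1 : R) * signedGaussBinom q h p.2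

@[simp]
lemma touchardConv_zero_left (h : ℕ) : touchardConv q 0 h = 1 := by simp [touchardConv]

lemma touchardConv_succ_zero (i : ℕ) :
    touchardConv q (i + 1) 0 = (1 - q) * touchardConv q i 1 := by
  simp only [touchardConv]
  rw [show 0 + 2 * (i + 1) = 2 * i + 1 + 1 by ring, sum_antidiagonal_ballot_succ, ballot_half,
    Int.cast_zero, zero_mul, zero_add, mul_sum, add_comm 1 (2 * i)]
  refine sum_congr rfl fun p _ => ?_
  rw [signedGaussBinom_zero_succ_add, mul_left_comm]

lemma touchardConv_succ_succ (i h : ℕ) :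
    touchardConv q (i + 1) (h + 1) =
      touchardConv q (i + 1) h + (1 - q ^ (h + 2)) * touchardConv q i (h + 2) := by
  simp only [touchardConv]
  rw [show h + 1 + 2 * (i + 1) = h + 2 * (i + 1) + 1 by ring,
    show h + 2 + 2 * i = h + 2 * (i + 1) by ring, sum_antidiagonal_ballot_succ,
    Nat.sum_antidiagonal_succ']
  simp only [signedGaussBinom_succ_add, signedGaussBinom_zero_right, mul_add, sum_add_distrib,
    mul_sum, mul_left_comm (1 - q ^ (h + 2)), add_assoc]

lemma toNat_neg_mul_sub_one_div_two (j : ℕ) :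
    ((-j : ℤ) * (-j - 1) / 2).toNat = (j + 1).choose 2 := by
  rw [Nat.choose_two_right, Nat.add_sub_cancel,
    show (-j : ℤ) * (-j - 1) = ((j + 1) * j : ℕ) by push_cast; ring]
  lia

lemma toNat_succ_mul_sub_one_div_two (j : ℕ) :
    (((j : ℤ) + 1) * (j + 1 - 1) / 2).toNat = (j + 1).choose 2 := by
  rw [Nat.choose_two_right, Nat.add_sub_cancel,
    show ((j : ℤ) + 1) * (j + 1 - 1) = ((j + 1) * j : ℕ) by push_cast; ring]
  lia

lemma sum_Icc_negOnePow_mul_choose (n : ℕ) :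
    ∑ k ∈ Icc (-n : ℤ) n, ((k.negOnePow : ℤ) : R) * q ^ (k * (k - 1) / 2).toNat *
      ((2 * n).choose (n + k).toNat : R) = touchardConv q n 0 := by
  set f : ℤ → R := fun k => ((k.negOnePow : ℤ) : R) * q ^ (k * (k - 1) / 2).toNat *
    ((2 * n).choose (n + k).toNat : R) with hf
  have f_boundary : f (n + 1) = 0 := by
    simp only [hf]
    rw [Nat.choose_eq_zero_of_lt (by lia), Nat.cast_zero, mul_zero]
  have f_pair (j : ℕ) (hj : j ≤ n) :
      f (-j) + f (j + 1) = (ballot (2 * n) (n - j) : R) * signedGaussBinom q 0 j := by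
    simp only [hf]
    rw [toNat_neg_mul_sub_one_div_two, toNat_succ_mul_sub_one_div_two, Int.negOnePow_neg,
      Int.negOnePow_succ, ballot_eq_choose_sub_choose (by lia), signedGaussBinom,
      show (n + -(j : ℤ)).toNat = n - j by lia,
      show (n + ((j : ℤ) + 1)).toNat = 2 * n + 1 - (n - j) by lia]
    push_cast [Int.cast_negOnePow_natCast]
    rw [gaussBinom_zero_left]
    ring
  rw [← add_zero (∑ k ∈ _, _), ← f_boundary, sum_Icc_neg_add_sum_succ, touchardConv,
    ← Nat.sum_antidiagonal_swap, Nat.sum_antidiagonal_eq_sum_range_succ_mk, zero_add]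
  exact sum_congr rfl fun j hj => f_pair j (by simpa [Nat.lt_succ_iff] using hj)

end TouchardConvolution

section PerfectMatchings

variable {α : Type*} [DecidableEq α]

/-- `M` is a partition of `X` into blocks of size two. For `X = [2n]` this is `IsPairing n`; the
recursion on the last point needs arbitrary sets of points. -/
def IsPerfectMatching (X : Finset α) (M : Finset (Finset α)) : Prop :=
  (∀ B ∈ M, #B = 2) ∧ (M : Set (Finset α)).PairwiseDisjoint id ∧ M.biUnion id = X

/-- The finite set of all perfect matchings of `X`. -/
noncomputable def perfectMatchings (X : Finset α) : Finset (Finset (Finset α)) :=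
  {M ∈ X.powerset.powerset | IsPerfectMatching X M}

variable {X : Finset α} {M : Finset (Finset α)} {B : Finset α}

lemma IsPerfectMatching.subset (hM : IsPerfectMatching X M) (hB : B ∈ M) : B ⊆ X :=
  hM.2.2 ▸ subset_biUnion_of_mem id hB

@[simp]
lemma mem_perfectMatchings : M ∈ perfectMatchings X ↔ IsPerfectMatching X M := by
  simp only [perfectMatchings, mem_filter, mem_powerset, and_iff_right_iff_imp]
  exact fun hM B hB => mem_powerset.2 (hM.subset hB)

lemma IsPerfectMatching.two_mul_card (hM : IsPerfectMatching X M) : 2 * #M = #X := by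
  rw [← hM.2.2, card_biUnion hM.2.1, sum_const_nat (m := 2) (by exact hM.1), mul_comm]

lemma perfectMatchings_empty : perfectMatchings (∅ : Finset α) = {∅} := by
  ext M
  rw [mem_perfectMatchings, mem_singleton]
  constructor
  · intro hM
    simpa using hM.two_mul_card
  · rintro rfl
    simp [IsPerfectMatching]

lemma isPerfectMatching_iff_existsUnique :
    IsPerfectMatching X M ↔
      (∀ B ∈ M, #B = 2 ∧ B ⊆ X) ∧ ∀ x ∈ X, ∃! B, B ∈ M ∧ x ∈ B := by
  constructor
  · intro hM
    refine ⟨fun B hB => ⟨hM.1 B hB, hM.subset hB⟩, fun x hx => ?_⟩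
    obtain ⟨B, hB, hxB⟩ := mem_biUnion.1 (hM.2.2 ▸ hx)
    refine ⟨B, ⟨hB, hxB⟩, fun C hC => ?_⟩
    by_contra hCB
    exact disjoint_left.1 (hM.2.1 hC.1 hB hCB) hC.2 hxB
  · rintro ⟨hblock, hcover⟩
    refine ⟨fun B hB => (hblock B hB).1, fun B hB C hC hBC => ?_, ?_⟩
    · refine disjoint_left.2 fun x hxB hxC => hBC ?_
      exact (hcover x ((hblock B hB).2 hxB)).unique ⟨hB, hxB⟩ ⟨hC, hxC⟩
    · ext x
      rw [mem_biUnion]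
      exact ⟨fun ⟨B, hB, hxB⟩ => (hblock B hB).2 hxB, fun hx => (hcover x hx).exists⟩

lemma isPerfectMatching_union_insert (hB : #B = 2) (hBX : Disjoint B X) (hBM : B ∉ M) :
    IsPerfectMatching (B ∪ X) (insert B M) ↔ IsPerfectMatching X M := by
  have hdisj : (∀ C ∈ M, Disjoint B C) ↔ Disjoint B (M.biUnion id) := by
    simp [disjoint_biUnion_right]
  simp only [IsPerfectMatching, forall_mem_insert, hB, true_and, biUnion_insert, id, coe_insert,
    Set.pairwiseDisjoint_insert_of_notMem (mt mem_coe.1 hBM), mem_coe, hdisj]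
  constructor
  · rintro ⟨hcard, ⟨hpw, hBM⟩, hX⟩
    refine ⟨hcard, hpw, ?_⟩
    rw [← union_sdiff_cancel_left hBM, ← union_sdiff_cancel_left hBX]
    exact congrArg (· \ B) hX
  · rintro ⟨hcard, hpw, rfl⟩
    exact ⟨hcard, ⟨hpw, hBX⟩, rfl⟩

lemma IsPerfectMatching.exists_pair_mem {N : α} (hM : IsPerfectMatching (insert N X) M) :
    ∃ c ∈ X, {c, N} ∈ M := by
  obtain ⟨B, hB, (hNB : N ∈ B)⟩ := mem_biUnion.1 (hM.2.2 ▸ mem_insert_self N X)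
  obtain ⟨c, hc⟩ : ∃ c, B.erase N = {c} := by
    rw [← card_eq_one, card_erase_of_mem hNB, hM.1 B hB]
  obtain rfl : {c, N} = B := by rw [pair_comm, ← insert_erase hNB, hc]
  have hcN : c ∈ ({c, N} : Finset α).erase N := hc ▸ mem_singleton_self c
  exact ⟨c, mem_of_mem_insert_of_ne (hM.subset hB (mem_of_mem_erase hcN)) (ne_of_mem_erase hcN), hB⟩

lemma sum_perfectMatchings_insert {S : Type*} [AddCommMonoid S] {N : α} (hN : N ∉ X)
    (f : Finset (Finset α) → S) :
    ∑ M ∈ perfectMatchings (insert N X), f M =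
      ∑ c ∈ X, ∑ M ∈ perfectMatchings (X.erase c), f (insert {c, N} M) := by
  have notMem {c c' : α} {M} (hM : IsPerfectMatching (X.erase c') M) : {c, N} ∉ M :=
    fun h => hN (mem_of_mem_erase (hM.subset h (by simp)))
  have insert_pair {c : α} (hc : c ∈ X) {M} (h : {c, N} ∉ M) :
      IsPerfectMatching (insert N X) (insert {c, N} M) ↔ IsPerfectMatching (X.erase c) M := by
    rw [← isPerfectMatching_union_insert (card_pair (ne_of_mem_of_not_mem hc hN)) _ h]
    · congr! 1
      grind
    · simp [hN]
  rw [sum_sigma']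
  symm
  refine sum_nbij (fun p => insert {p.1, N} p.2) ?_ ?_ ?_ fun _ _ => rfl
  · rintro ⟨c, M⟩ h
    simp only [mem_sigma, mem_perfectMatchings] at h ⊢
    exact (insert_pair h.1 (notMem h.2)).2 h.2
  · rintro ⟨c, M⟩ h ⟨c', M'⟩ h' heq
    simp only [coe_sigma, Set.mem_sigma_iff, mem_coe, mem_perfectMatchings] at h h' heq
    obtain rfl : c = c' := by
      have hpair : ({c, N} : Finset α) = {c', N} :=
        (mem_insert.1 (heq ▸ mem_insert_self _ M)).resolve_right (notMem h'.2)
      have hc : c ∈ ({c', N} : Finset α) := hpair ▸ mem_insert_self c _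
      simpa [ne_of_mem_of_not_mem h.1 hN] using hc
    rw [← erase_insert (notMem h.2), heq, erase_insert (notMem h'.2)]
  · intro M hM
    rw [mem_coe, mem_perfectMatchings] at hM
    obtain ⟨c, hc, hcM⟩ := hM.exists_pair_mem
    refine ⟨⟨c, M.erase {c, N}⟩, ?_, insert_erase hcM⟩
    simp only [coe_sigma, Set.mem_sigma_iff, mem_coe, mem_perfectMatchings]
    rw [← insert_pair hc (notMem_erase _ _), insert_erase hcM]
    exact ⟨hc, hM⟩

end PerfectMatchings

section Crossings

/-- The block `B` has points on both sides of `s`: its chord crosses the half-line that a partial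
matching attaches to the open point `s`. -/
def Straddles (B : Finset ℕ) (s : ℕ) : Prop := ∃ a ∈ B, ∃ b ∈ B, a < s ∧ s < b

lemma crNum_eq_sum (M : Finset (Finset ℕ)) : crNum M = ∑ B ∈ M, #{C ∈ M | CrossAsym B C} := by
  simp only [card_filter, ← sum_product' M M fun B C => if CrossAsym B C then 1 else 0]
  rw [← card_filter, crNum, ← Set.ncard_coe_finset]
  congr 1
  ext p
  simp [and_assoc]

lemma crNum_le (M : Finset (Finset ℕ)) : crNum M ≤ #M * #M := by
  rw [crNum_eq_sum, ← smul_eq_mul]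
  exact sum_le_card_nsmul _ _ _ fun B _ => card_filter_le _ _

lemma crossAsym_pair_iff_straddles {B : Finset ℕ} {c N : ℕ} (hB : #B = 2)
    (hBN : ∀ y ∈ B, y < N) : CrossAsym B {c, N} ↔ Straddles B c := by
  constructor
  · rintro ⟨a, b, c', d, hac, hcb, -, rfl, hpair⟩
    have hbN := hBN b (by simp)
    have hc' : c' ∈ ({c, N} : Finset ℕ) := hpair ▸ mem_insert_self c' _
    obtain rfl : c' = c := by grind
    exact ⟨a, by simp, b, by simp, hac, hcb⟩
  · rintro ⟨a, ha, b, hb, hac, hcb⟩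
    refine ⟨a, b, c, N, hac, hcb, hBN b hb, ?_, rfl⟩
    refine (eq_of_subset_of_card_le ?_ ?_).symm
    · exact insert_subset ha (singleton_subset_iff.2 hb)
    · rw [hB, card_pair (by lia)]

lemma not_crossAsym_of_forall_le {B : Finset ℕ} {c N : ℕ} (hB : ∀ y ∈ B, y ≤ N) :
    ¬ CrossAsym {c, N} B := by
  rintro ⟨a, b, c', d, hac, hcb, hbd, hpair, rfl⟩
  have hdN := hB d (by simp)
  have hN : N ∈ ({a, b} : Finset ℕ) := hpair ▸ by simp
  grind

lemma crNum_insert_pair {M : Finset (Finset ℕ)} {c N : ℕ} (hcN : c < N)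
    (hM : ∀ B ∈ M, #B = 2) (hMN : ∀ B ∈ M, ∀ y ∈ B, y < N) :
    crNum (insert {c, N} M) = crNum M + #{B ∈ M | Straddles B c} := by
  have hpair : ({c, N} : Finset ℕ) ∉ M := fun h => lt_irrefl N (hMN _ h N (by simp))
  have last_crosses_none : #{C ∈ insert {c, N} M | CrossAsym {c, N} C} = 0 := by
    rw [card_eq_zero, filter_eq_empty_iff, forall_mem_insert]
    refine ⟨not_crossAsym_of_forall_le ?_, fun C hC => not_crossAsym_of_forall_le ?_⟩
    · simp [hcN.le]
    · exact fun y hy => (hMN C hC y hy).le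
  rw [crNum_eq_sum, crNum_eq_sum, sum_insert hpair, last_crosses_none, zero_add, card_filter,
    ← sum_add_distrib]
  refine sum_congr rfl fun B hB => ?_
  simp only [card_filter, sum_insert hpair, crossAsym_pair_iff_straddles (hM B hB) (hMN B hB),
    add_comm]

/-- The number of crossings of the partial matching with chords `M` and open points `S`: from each
open point a half-line goes up, and it crosses the chords it separates but no other half-line. -/
noncomputable def openCrNum (M : Finset (Finset ℕ)) (S : Finset ℕ) : ℕ :=
  crNum M + ∑ s ∈ S, #{B ∈ M | Straddles B s}

variable {M : Finset (Finset ℕ)} {S : Finset ℕ} {c N : ℕ}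

lemma openCrNum_insert_open (hMN : ∀ B ∈ M, ∀ y ∈ B, y < N) (hN : N ∉ S) :
    openCrNum M (insert N S) = openCrNum M S := by
  have not_straddles (B) (hB : B ∈ M) : ¬ Straddles B N :=
    fun ⟨_, _, b, hb, _, hNb⟩ => (hMN B hB b hb).not_gt hNb
  rw [openCrNum, openCrNum, sum_insert hN, filter_false_of_mem not_straddles, card_empty, zero_add]

lemma openCrNum_insert_pair (hcN : c < N) (hM : ∀ B ∈ M, #B = 2)
    (hMN : ∀ B ∈ M, ∀ y ∈ B, y < N) (hSN : ∀ s ∈ S, s < N) (hcS : c ∉ S) :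
    openCrNum (insert {c, N} M) S = #{s ∈ S | c < s} + openCrNum M (insert c S) := by
  have hpair : ({c, N} : Finset ℕ) ∉ M := fun h => lt_irrefl N (hMN _ h N (by simp))
  have pair_straddles (s) (hs : s ∈ S) : Straddles {c, N} s ↔ c < s := by
    have := hSN s hs
    grind [Straddles]
  have straddle_sum : ∑ s ∈ S, #{B ∈ insert {c, N} M | Straddles B s} =
      #{s ∈ S | c < s} + ∑ s ∈ S, #{B ∈ M | Straddles B s} := by
    rw [card_filter, ← sum_add_distrib]
    refine sum_congr rfl fun s hs => ?_
    simp only [card_filter, sum_insert hpair, pair_straddles s hs]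
  rw [openCrNum, openCrNum, straddle_sum, crNum_insert_pair hcN hM hMN, sum_insert hcS]
  ring

end Crossings

section PartialMatchings

variable {R : Type*}

/-- The generating function by crossings of the partial matchings with open points `S` whose chords
match the points of `Y`. -/
noncomputable def openMatchingSum [Semiring R] (q : R) (Y S : Finset ℕ) : R :=
  ∑ M ∈ perfectMatchings Y, q ^ openCrNum M S

/-- The generating function by crossings of the partial matchings of `X` with `h` open points. -/
noncomputable def partialMatchingSum [Semiring R] (q : R) (X : Finset ℕ) (h : ℕ) : R :=
  ∑ S ∈ X.powersetCard h, openMatchingSum q (X \ S) S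

section Semiring

variable [Semiring R] (q : R) {X Y S : Finset ℕ} {N : ℕ}

lemma openMatchingSum_insert_open (hY : ∀ y ∈ Y, y < N) (hN : N ∉ S) :
    openMatchingSum q Y (insert N S) = openMatchingSum q Y S := by
  refine sum_congr rfl fun M hM => ?_
  rw [mem_perfectMatchings] at hM
  rw [openCrNum_insert_open (fun B hB y hy => hY y (hM.subset hB hy)) hN]

lemma openMatchingSum_insert_matched (hYS : Disjoint Y S) (hY : ∀ y ∈ Y, y < N)
    (hS : ∀ s ∈ S, s < N) :
    openMatchingSum q (insert N Y) S =
      ∑ c ∈ Y, q ^ #{s ∈ insert c S | c < s} * openMatchingSum q (Y.erase c) (insert c S) := by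
  rw [openMatchingSum, sum_perfectMatchings_insert fun h => lt_irrefl N (hY N h)]
  refine sum_congr rfl fun c hc => ?_
  rw [openMatchingSum, mul_sum]
  refine sum_congr rfl fun M hM => ?_
  rw [mem_perfectMatchings] at hM
  rw [← pow_add, filter_insert, if_neg (lt_irrefl c),
    openCrNum_insert_pair (hY c hc) hM.1 _ hS (disjoint_left.1 hYS hc)]
  exact fun B hB y hy => hY y (mem_of_mem_erase (hM.subset hB hy))

lemma sum_openMatchingSum_insert_matched (hX : ∀ x ∈ X, x < N) (h : ℕ) :
    ∑ S ∈ X.powersetCard h, openMatchingSum q (insert N (X \ S)) S =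
      (∑ i ∈ range (h + 1), q ^ i) * partialMatchingSum q X (h + 1) :=
  calc ∑ S ∈ X.powersetCard h, openMatchingSum q (insert N (X \ S)) S
    _ = ∑ S ∈ X.powersetCard h, ∑ c ∈ X \ S, q ^ #{s ∈ insert c S | c < s} *
          openMatchingSum q (X \ insert c S) (insert c S) := by
      refine sum_congr rfl fun S hS => ?_
      rw [mem_powersetCard] at hS
      simp only [openMatchingSum_insert_matched q sdiff_disjoint
        (fun y hy => hX y (sdiff_subset hy)) fun s hs => hX s (hS.1 hs), sdiff_insert]
    _ = ∑ S ∈ X.powersetCard (h + 1), ∑ c ∈ S, q ^ #{s ∈ S | c < s} *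
          openMatchingSum q (X \ S) S :=
      sum_powersetCard_sum_sdiff X h fun S c =>
        q ^ #{s ∈ S | c < s} * openMatchingSum q (X \ S) S
    _ = _ := by
      rw [partialMatchingSum, mul_sum]
      refine sum_congr rfl fun S hS => ?_
      rw [← sum_mul, sum_card_filter_gt S (q ^ ·), (mem_powersetCard.1 hS).2]

lemma partialMatchingSum_insert_zero (hX : ∀ x ∈ X, x < N) :
    partialMatchingSum q (insert N X) 0 = partialMatchingSum q X 1 := by
  simpa [partialMatchingSum] using sum_openMatchingSum_insert_matched q hX 0

lemma partialMatchingSum_insert_succ (hX : ∀ x ∈ X, x < N) (h : ℕ) :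
    partialMatchingSum q (insert N X) (h + 1) =
      partialMatchingSum q X h +
        (∑ i ∈ range (h + 2), q ^ i) * partialMatchingSum q X (h + 2) := by
  have hN : N ∉ X := fun h => lt_irrefl N (hX N h)
  rw [partialMatchingSum, sum_powersetCard_insert hN, add_comm,
    ← sum_openMatchingSum_insert_matched q hX, partialMatchingSum]
  congr 1
  · refine sum_congr rfl fun S hS => ?_
    have hNS : N ∉ S := fun h => hN ((mem_powersetCard.1 hS).1 h)
    rw [insert_sdiff_insert, sdiff_insert_of_notMem hN,
      openMatchingSum_insert_open q (fun y hy => hX y (sdiff_subset hy)) hNS]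
  · refine sum_congr rfl fun S hS => ?_
    rw [insert_sdiff_of_notMem _ fun h => hN ((mem_powersetCard.1 hS).1 h)]

lemma partialMatchingSum_of_card_lt {h : ℕ} (hX : #X < h) : partialMatchingSum q X h = 0 := by
  rw [partialMatchingSum, powersetCard_eq_empty.2 hX, sum_empty]

lemma partialMatchingSum_zero (X : Finset ℕ) :
    partialMatchingSum q X 0 = ∑ M ∈ perfectMatchings X, q ^ crNum M := by
  simp [partialMatchingSum, openMatchingSum, openCrNum]

lemma partialMatchingSum_empty_zero : partialMatchingSum q ∅ 0 = 1 := by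
  simp [partialMatchingSum_zero, perfectMatchings_empty, crNum_eq_sum]

end Semiring

lemma one_sub_pow_mul_partialMatchingSum [CommRing R] (q : R) {X : Finset ℕ} {i h : ℕ}
    (hX : #X = h + 2 * i) : (1 - q) ^ i * partialMatchingSum q X h = touchardConv q i h := by
  induction X using Finset.induction_on_max generalizing i h with
  | empty =>
    obtain ⟨rfl, rfl⟩ : h = 0 ∧ i = 0 := by simpa using hX.symm
    simp [partialMatchingSum_empty_zero]
  | insert N X hN ih =>
    rw [card_insert_of_notMem fun h => lt_irrefl N (hN N h)] at hX
    match h, i with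
    | 0, 0 => lia
    | 0, i + 1 =>
      rw [partialMatchingSum_insert_zero q hN, touchardConv_succ_zero, ← ih (by lia)]
      ring
    | h + 1, 0 =>
      rw [partialMatchingSum_insert_succ q hN,
        partialMatchingSum_of_card_lt q (by lia : #X < h + 2), mul_zero, add_zero, ih (by lia),
        touchardConv_zero_left, touchardConv_zero_left]
    | h + 1, i + 1 =>
      rw [partialMatchingSum_insert_succ q hN, touchardConv_succ_succ, ← ih (by lia : #X = _),
        ← ih (by lia : #X = _), ← mul_neg_geom_sum q (h + 2)]
      ring

lemma sum_tCount_mul_pow [Semiring R] (n : ℕ) (q : R) :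
    ∑ k ∈ range (n * n + 1), (tCount n k : R) * q ^ k =
      ∑ M ∈ perfectMatchings (Icc 1 (2 * n)), q ^ crNum M := by
  have crNum_lt (M) (hM : M ∈ perfectMatchings (Icc 1 (2 * n))) :
      crNum M ∈ range (n * n + 1) := by
    have hcard : #M = n := by simpa using (mem_perfectMatchings.1 hM).two_mul_card
    simpa [hcard, Nat.lt_succ_iff] using crNum_le M
  have tCount_eq (k : ℕ) :
      tCount n k = #{M ∈ perfectMatchings (Icc 1 (2 * n)) | crNum M = k} := by
    rw [tCount, ← Set.ncard_coe_finset]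
    simp [isPerfectMatching_iff_existsUnique, IsPairing]
  rw [← sum_fiberwise_of_maps_to' crNum_lt]
  simp only [tCount_eq, sum_const, nsmul_eq_mul]

end PartialMatchings

end TouchardRiordan

theorem touchard_riordan_general {R : Type*} [CommRing R] (n : ℕ) (q : R) :
    (1 - q) ^ n * ∑ k ∈ Finset.range (n * n + 1), (tCount n k : R) * q ^ k =
      ∑ k ∈ Finset.Icc (-n : ℤ) n, ((k.negOnePow : ℤ) : R) * q ^ (k * (k - 1) / 2).toNat *
        ((2 * n).choose (n + k).toNat : R) := by
  rw [TouchardRiordan.sum_tCount_mul_pow, ← TouchardRiordan.partialMatchingSum_zero,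
    TouchardRiordan.one_sub_pow_mul_partialMatchingSum q (by simp),
    TouchardRiordan.sum_Icc_negOnePow_mul_choose]

/-- Touchard–Riordan formula: `(1−q)^n · T_n(q) = ∑_{k=-n}^n (-1)^k q^{k(k-1)/2} C(2n, n+k)`. -/
theorem touchard_riordan (n : ℕ) (hn : 1 ≤ n) (q : ℂ) :
    (1 - q) ^ n * Tpoly n q = touchardSum n q := by
  simpa only [Tpoly, touchardSum, Int.cast_negOnePow] using touchard_riordan_general n q
end

section
/- For every q ∈ (-1,1), lim_{n→∞} |T_n(q)|^{1/(2n)} = 2/√(1−q), where T_n(q) = ∑_{π a pairing on [2n]} q^{cr(π)}. -/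
open scoped Classical

/-!
Scan the points of `[2n]` from left to right. A point that closes a chord opened at `c` makes that
chord cross the chords opened after `c` and still open, so closing one of `i + 1` open chords
contributes `1 + q + ⋯ + q ^ i = [i + 1]_q`, and `T_n(q)` is the sum over Dyck paths of length `2n`
in which a down-step from height `i + 1` has weight `[i + 1]_q > 0` (Touchard–Riordan).

Upper bound: if `φ` is positive and satisfies `φ (h - 1) + [h + 1]_q φ (h + 1) ≤ r φ h`, the sum is
at most `r ^ (2n)`. For `r = 2 / √(1 - q)` this holds with equality for `φ h = √(1 - q) ^ h c_h`,
where `∑ c_h X ^ h = 1 / (X; q)_∞ ^ 2`: the functional equation `(1 - X) E(X) = E(q X)` of Euler's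
series `E(X) = 1 / (X; q)_∞` becomes the three-term recurrence of the `q`-Hermite polynomials, and
the coefficients of `E` are visibly positive for `|q| < 1`.

Lower bound: the weights converge to `1 / (1 - q)`, so for every `l < 1 / (1 - q)` the paths that
spend all but boundedly many steps above a fixed large height contribute at least a constant times
`l ^ n` times the Catalan number, which grows like `4 ^ n` up to a polynomial factor.
-/

open Finset Filter Topology Asymptotics PowerSeries

section DyckPrefixSum

/-- The weighted count of Dyck prefixes (`±1` paths on `ℕ` started at `0`) of length `N` that end
at height `h`; a down-step from `i + 1` to `i` has weight `w i`, an up-step has weight `1`. -/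
def dyckPrefixSum {R : Type*} [Semiring R] (w : ℕ → R) : ℕ → ℕ → R
  | 0, 0 => 1
  | 0, _ + 1 => 0
  | N + 1, 0 => w 0 * dyckPrefixSum w N 1
  | N + 1, h + 1 => dyckPrefixSum w N h + w (h + 1) * dyckPrefixSum w N (h + 2)

theorem dyckPrefixSum_succ_zero {R : Type*} [Semiring R] (w : ℕ → R) (N : ℕ) :
    dyckPrefixSum w (N + 1) 0 = w 0 * dyckPrefixSum w N 1 :=
  rfl

theorem dyckPrefixSum_succ_succ {R : Type*} [Semiring R] (w : ℕ → R) (N h : ℕ) :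
    dyckPrefixSum w (N + 1) (h + 1) =
      dyckPrefixSum w N h + w (h + 1) * dyckPrefixSum w N (h + 2) :=
  rfl

section Const

variable {R : Type*} [CommRing R]

-- The ballot numbers; the factor `l ^ h` avoids the truncated exponent `k - h`.
theorem pow_mul_dyckPrefixSum_const (l : R) {N h k : ℕ} (hk : N + h = 2 * k) :
    l ^ h * dyckPrefixSum (fun _ => l) N h = l ^ k * (N.choose k - N.choose (k + 1)) := by
  induction N generalizing h k with
  | zero =>
    obtain rfl : h = 2 * k := by omega
    cases k <;> simp [dyckPrefixSum, Nat.mul_succ]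
  | succ N ih =>
    obtain ⟨k, rfl⟩ : ∃ m, k = m + 1 := ⟨k - 1, by omega⟩
    cases h with
    | zero =>
      obtain rfl : N = 2 * k + 1 := by omega
      have down := ih (h := 1) (k := k + 1) (by omega)
      have symm : ((2 * k + 1).choose (k + 1) : R) = (2 * k + 1).choose k :=
        congrArg Nat.cast (Nat.choose_symm_half k)
      rw [dyckPrefixSum_succ_zero, Nat.choose_succ_succ' _ k, Nat.choose_succ_succ' _ (k + 1)]
      push_cast
      linear_combination down + l ^ (k + 1) * symm
    | succ h =>
      have up := ih (h := h) (k := k) (by omega)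
      have down := ih (h := h + 2) (k := k + 1) (by omega)
      rw [dyckPrefixSum_succ_succ, Nat.choose_succ_succ' _ k, Nat.choose_succ_succ' _ (k + 1)]
      push_cast
      linear_combination l * up + down

theorem choose_sub_choose_succ_eq_catalan (n : ℕ) :
    ((2 * n).choose n - (2 * n).choose (n + 1) : ℤ) = catalan n := by
  have ratio : (2 * n).choose (n + 1) * (n + 1) = (2 * n).choose n * n := by
    rw [Nat.choose_succ_right_eq, two_mul, Nat.add_sub_cancel]
  have central := succ_mul_catalan_eq_centralBinom n
  rw [Nat.centralBinom] at central
  zify at ratio central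
  refine mul_left_cancel₀ (by positivity : (n + 1 : ℤ) ≠ 0) ?_
  linear_combination -ratio - central

theorem dyckPrefixSum_const_two_mul_zero (l : R) (n : ℕ) :
    dyckPrefixSum (fun _ => l) (2 * n) 0 = l ^ n * catalan n := by
  have ballot := pow_mul_dyckPrefixSum_const l (N := 2 * n) (h := 0) (k := n) rfl
  have catalan_eq := congrArg (Int.cast (R := R)) (choose_sub_choose_succ_eq_catalan n)
  push_cast at catalan_eq
  rwa [pow_zero, one_mul, catalan_eq] at ballot

end Const

section Order

variable {R : Type*} [PartialOrder R] {v w : ℕ → R}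

section Semiring

variable [Semiring R] [IsOrderedRing R]

theorem dyckPrefixSum_nonneg (hw : ∀ i, 0 ≤ w i) (N h : ℕ) : 0 ≤ dyckPrefixSum w N h := by
  induction N generalizing h with
  | zero => cases h <;> simp [dyckPrefixSum]
  | succ N ih =>
    cases h with
    | zero => exact mul_nonneg (hw 0) (ih 1)
    | succ h => exact add_nonneg (ih h) (mul_nonneg (hw _) (ih _))

theorem dyckPrefixSum_mono (hv : ∀ i, 0 ≤ v i) (hvw : ∀ i, v i ≤ w i) (N h : ℕ) :
    dyckPrefixSum v N h ≤ dyckPrefixSum w N h := by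
  have down (N i j : ℕ) (ih : dyckPrefixSum v N j ≤ dyckPrefixSum w N j) :
      v i * dyckPrefixSum v N j ≤ w i * dyckPrefixSum w N j :=
    mul_le_mul (hvw i) ih (dyckPrefixSum_nonneg hv N j) ((hv i).trans (hvw i))
  induction N generalizing h with
  | zero => cases h <;> exact le_rfl
  | succ N ih =>
    cases h with
    | zero => exact down N 0 1 (ih 1)
    | succ h => exact add_le_add (ih h) (down N (h + 1) (h + 2) (ih _))

theorem dyckPrefixSum_shift_le (hw : ∀ i, 0 ≤ w i) (N h : ℕ) :
    dyckPrefixSum (fun i => w (i + 1)) N h ≤ dyckPrefixSum w (N + 1) (h + 1) := by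
  induction N generalizing h with
  | zero => cases h <;> simp [dyckPrefixSum]
  | succ N ih =>
    cases h with
    | zero =>
      exact (mul_le_mul_of_nonneg_left (ih 1) (hw 1)).trans
        (le_add_of_nonneg_left (dyckPrefixSum_nonneg hw (N + 1) 0))
    | succ h => exact add_le_add (ih h) (mul_le_mul_of_nonneg_left (ih (h + 2)) (hw _))

end Semiring

section CommSemiring

variable [CommSemiring R] [IsOrderedRing R]

-- Climb to height `H`, follow a path that stays above `H`, and descend again.
theorem prod_mul_dyckPrefixSum_shift_le (hw : ∀ i, 0 ≤ w i) (H N : ℕ) :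
    (∏ i ∈ range H, w i) * dyckPrefixSum (fun i => w (i + H)) N 0 ≤
      dyckPrefixSum w (N + 2 * H) 0 := by
  induction H generalizing w with
  | zero => simp
  | succ H ih =>
    calc (∏ i ∈ range (H + 1), w i) * dyckPrefixSum (fun i => w (i + (H + 1))) N 0
        = w 0 * ((∏ i ∈ range H, w (i + 1)) *
            dyckPrefixSum (fun i => w (i + H + 1)) N 0) := by
          rw [prod_range_succ', mul_comm _ (w 0), mul_assoc]; rfl
      _ ≤ w 0 * dyckPrefixSum (fun i => w (i + 1)) (N + 2 * H) 0 :=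
          mul_le_mul_of_nonneg_left (ih fun i => hw (i + 1)) (hw 0)
      _ ≤ w 0 * dyckPrefixSum w (N + 2 * H + 1) 1 :=
          mul_le_mul_of_nonneg_left (dyckPrefixSum_shift_le hw _ 0) (hw 0)
      _ = dyckPrefixSum w (N + 2 * (H + 1)) 0 := rfl

theorem dyckPrefixSum_le_of_superharmonic (hw : ∀ i, 0 ≤ w i) {r : R} (hr : 0 ≤ r) {φ : ℕ → R}
    (hφ : ∀ h, 0 ≤ φ h) (hφ₀ : 1 ≤ φ 0) (hzero : w 0 * φ 1 ≤ r * φ 0)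
    (hsucc : ∀ h, φ h + w (h + 1) * φ (h + 2) ≤ r * φ (h + 1)) (N h : ℕ) :
    dyckPrefixSum w N h ≤ r ^ N * φ h := by
  induction N generalizing h with
  | zero => cases h <;> simp [dyckPrefixSum, hφ₀, hφ]
  | succ N ih =>
    cases h with
    | zero =>
      calc dyckPrefixSum w (N + 1) 0 ≤ w 0 * (r ^ N * φ 1) :=
            mul_le_mul_of_nonneg_left (ih 1) (hw 0)
        _ = r ^ N * (w 0 * φ 1) := by ring
        _ ≤ r ^ N * (r * φ 0) := mul_le_mul_of_nonneg_left hzero (pow_nonneg hr N)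
        _ = r ^ (N + 1) * φ 0 := by ring
    | succ h =>
      calc dyckPrefixSum w (N + 1) (h + 1)
          ≤ r ^ N * φ h + w (h + 1) * (r ^ N * φ (h + 2)) :=
            add_le_add (ih h) (mul_le_mul_of_nonneg_left (ih _) (hw _))
        _ = r ^ N * (φ h + w (h + 1) * φ (h + 2)) := by ring
        _ ≤ r ^ N * (r * φ (h + 1)) := mul_le_mul_of_nonneg_left (hsucc h) (pow_nonneg hr N)
        _ = r ^ (N + 1) * φ (h + 1) := by ring

end CommSemiring

end Order

end DyckPrefixSum

section GrowthRate

theorem four_pow_le_four_mul_sq_mul_catalan {n : ℕ} (hn : 0 < n) :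
    4 ^ n ≤ 4 * (n ^ 2 * catalan n) :=
  calc 4 ^ n ≤ 2 * n * n.centralBinom := Nat.four_pow_le_two_mul_self_mul_centralBinom n hn
    _ = 2 * n * ((n + 1) * catalan n) := by rw [succ_mul_catalan_eq_centralBinom]
    _ ≤ 2 * n * (2 * n * catalan n) := by gcongr; omega
    _ = 4 * (n ^ 2 * catalan n) := by ring

theorem isLittleO_pow_catalan {r : ℝ} (hr : |r| < 4) :
    (fun n => r ^ n) =o[atTop] fun n => (catalan n : ℝ) := by
  have poly_mul : (fun n : ℕ => (n : ℝ) ^ 2 * r ^ n) =o[atTop] fun n => (4 : ℝ) ^ n :=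
    isLittleO_pow_const_mul_const_pow_const_pow_of_norm_lt 2 hr
  rw [isLittleO_iff] at poly_mul ⊢
  intro c hc
  filter_upwards [poly_mul (c := c / 4) (by positivity), eventually_gt_atTop 0] with n hn hpos
  have four_pow : (4 : ℝ) ^ n ≤ 4 * (n ^ 2 * catalan n) :=
    mod_cast four_pow_le_four_mul_sq_mul_catalan hpos
  simp only [norm_mul, norm_pow, RCLike.norm_natCast, RCLike.norm_ofNat] at hn ⊢
  have sq_pos : (0 : ℝ) < n ^ 2 := by positivity
  refine le_of_mul_le_mul_left ?_ sq_pos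
  calc (n : ℝ) ^ 2 * ‖r‖ ^ n ≤ c / 4 * 4 ^ n := hn
    _ ≤ c / 4 * (4 * (n ^ 2 * catalan n)) := by gcongr
    _ = n ^ 2 * (c * catalan n) := by ring

theorem isLittleO_pow_dyckPrefixSum {w : ℕ → ℝ} (hw : ∀ i, 0 < w i) {l r : ℝ} (hl : 0 < l)
    (hlw : ∀ᶠ i in atTop, l ≤ w i) (hr : |r| < 4 * l) :
    (fun n => r ^ n) =o[atTop] fun n => dyckPrefixSum w (2 * n) 0 := by
  obtain ⟨H, hH⟩ := eventually_atTop.1 hlw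
  have prod_pos : 0 < ∏ i ∈ range H, w i := prod_pos fun i _ => hw i
  have bound (n : ℕ) : (∏ i ∈ range H, w i) * (l ^ n * catalan n) ≤
      dyckPrefixSum w (2 * (n + H)) 0 :=
    calc (∏ i ∈ range H, w i) * (l ^ n * catalan n)
        = (∏ i ∈ range H, w i) * dyckPrefixSum (fun _ => l) (2 * n) 0 := by
          rw [dyckPrefixSum_const_two_mul_zero]
      _ ≤ (∏ i ∈ range H, w i) * dyckPrefixSum (fun i => w (i + H)) (2 * n) 0 :=
          mul_le_mul_of_nonneg_left
            (dyckPrefixSum_mono (fun _ => hl.le) (fun i => hH _ (Nat.le_add_left H i)) _ _)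
            prod_pos.le
      _ ≤ dyckPrefixSum w (2 * (n + H)) 0 :=
          mul_add 2 n H ▸ prod_mul_dyckPrefixSum_shift_le (fun i => (hw i).le) H (2 * n)
  have ratio : |r / l| < 4 := by rwa [abs_div, abs_of_pos hl, div_lt_iff₀ hl]
  have pow_n : (fun n => r ^ n) =o[atTop] fun n => l ^ n * (catalan n : ℝ) := by
    refine ((isBigO_refl (fun n => l ^ n) atTop).mul_isLittleO
      (isLittleO_pow_catalan ratio)).congr_left fun n => ?_
    rw [← mul_pow, mul_div_cancel₀ r hl.ne']
  have pow_add : (fun n => r ^ (n + H)) =o[atTop] fun n => dyckPrefixSum w (2 * (n + H)) 0 := by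
    simp only [_root_.pow_add, mul_comm _ (r ^ H)]
    refine ((pow_n.const_mul_left (r ^ H)).const_mul_right prod_pos.ne').trans_isBigO ?_
    refine IsBigO.of_norm_le fun n => ?_
    rw [Real.norm_of_nonneg (by positivity)]
    exact bound n
  rw [← map_add_atTop_eq_nat H, isLittleO_map]
  exact pow_add

theorem tendsto_rpow_one_div_of_pow_bounds {ι : Type*} {F : Filter ι} {f : ι → ℝ} {N : ι → ℕ}
    {L : ℝ} (hL : 0 < L) (hN : ∀ᶠ i in F, N i ≠ 0) (hf : ∀ᶠ i in F, 0 ≤ f i)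
    (hupper : ∀ᶠ i in F, f i ≤ L ^ N i)
    (hlower : ∀ t, 0 < t → t < L → ∀ᶠ i in F, t ^ N i ≤ f i) :
    Tendsto (fun i => f i ^ (1 / (N i : ℝ))) F (𝓝 L) := by
  refine tendsto_order.2 ⟨fun a ha => ?_, fun b hb => ?_⟩
  · obtain ⟨t, hat, htL⟩ := exists_between (max_lt ha hL)
    obtain ⟨hat, ht⟩ := max_lt_iff.1 hat
    filter_upwards [hN, hlower t ht htL] with i hNi hi
    calc a < t := hat
      _ = (t ^ N i) ^ (1 / (N i : ℝ)) := by rw [one_div, Real.pow_rpow_inv_natCast ht.le hNi]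
      _ ≤ f i ^ (1 / (N i : ℝ)) := by gcongr
  · filter_upwards [hN, hf, hupper] with i hNi hfi hi
    calc f i ^ (1 / (N i : ℝ)) ≤ (L ^ N i) ^ (1 / (N i : ℝ)) := by gcongr
      _ = L := by rw [one_div, Real.pow_rpow_inv_natCast hL.le hNi]
      _ < b := hb

theorem tendsto_dyckPrefixSum_rpow {w : ℕ → ℝ} (hw : ∀ i, 0 < w i) {r : ℝ} (hr : 0 < r)
    (hlim : Tendsto w atTop (𝓝 (r ^ 2 / 4))) {φ : ℕ → ℝ} (hφ : ∀ h, 0 ≤ φ h) (hφ₀ : φ 0 = 1)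
    (hzero : w 0 * φ 1 ≤ r * φ 0)
    (hsucc : ∀ h, φ h + w (h + 1) * φ (h + 2) ≤ r * φ (h + 1)) :
    Tendsto (fun n : ℕ => dyckPrefixSum w (2 * n) 0 ^ (1 / ((2 * n : ℕ) : ℝ))) atTop (𝓝 r) := by
  have nonneg (n : ℕ) : 0 ≤ dyckPrefixSum w (2 * n) 0 :=
    dyckPrefixSum_nonneg (fun i => (hw i).le) _ _
  refine tendsto_rpow_one_div_of_pow_bounds hr ?_ (.of_forall nonneg) (.of_forall fun n => ?_)
    fun t ht htr => ?_
  · filter_upwards [eventually_gt_atTop 0] with n hn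
    positivity
  · simpa [hφ₀] using dyckPrefixSum_le_of_superharmonic (fun i => (hw i).le) hr.le hφ hφ₀.ge
      hzero hsucc (2 * n) 0
  · obtain ⟨l, htl, hlr⟩ : ∃ l, t ^ 2 / 4 < l ∧ l < r ^ 2 / 4 := exists_between (by gcongr)
    have hl : 0 < l := lt_trans (by positivity) htl
    have small := isLittleO_pow_dyckPrefixSum hw hl (hlim.eventually_const_le hlr) (r := t ^ 2)
      (by rw [abs_of_pos (by positivity)]; linarith)
    filter_upwards [small.eventuallyLE] with n hn
    rwa [Real.norm_of_nonneg (by positivity), Real.norm_of_nonneg (nonneg n), ← pow_mul] at hn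

end GrowthRate

section QAnalogues

/-- The `q`-integer `[n]_q = 1 + q + ⋯ + q ^ (n - 1)`. -/
def qInt {R : Type*} [Semiring R] (q : R) (n : ℕ) : R := ∑ i ∈ range n, q ^ i

theorem one_sub_mul_qInt {R : Type*} [Ring R] (q : R) (n : ℕ) :
    (1 - q) * qInt q n = 1 - q ^ n :=
  mul_neg_geom_sum q n

/-- Euler's series `1 / (X; q)_∞ = ∑ k, X ^ k / (q; q)_k`. -/
noncomputable def eulerSeries {K : Type*} [Field K] (q : K) : K⟦X⟧ :=
  .mk fun k => (∏ i ∈ range k, (1 - q ^ (i + 1)))⁻¹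

section Field

variable {K : Type*} [Field K] {q : K}

theorem one_sub_X_mul_eulerSeries (hq : ∀ n, 1 - q ^ (n + 1) ≠ 0) :
    (1 - X) * eulerSeries q = rescale q (eulerSeries q) := by
  ext n
  cases n with
  | zero => simp [sub_mul]
  | succ n =>
    have hprod : ∏ i ∈ range n, (1 - q ^ (i + 1)) ≠ 0 := prod_ne_zero_iff.2 fun i _ => hq i
    simp only [sub_mul, one_mul, map_sub, coeff_succ_X_mul, coeff_rescale,
      eulerSeries, coeff_mk, prod_range_succ]
    field_simp [hq n]
    ring

/-- The square of Euler's series. Its coefficient of `X ^ h` is the Galois number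
`∑ k, [h choose k]_q`, the value at `1` of a continuous `q`-Hermite polynomial, divided by
`(q; q)_h`. -/
noncomputable def galoisSeries {K : Type*} [Field K] (q : K) : K⟦X⟧ := eulerSeries q ^ 2

theorem coeff_zero_galoisSeries : coeff 0 (galoisSeries q) = 1 := by
  simp [galoisSeries, eulerSeries]

theorem rescale_galoisSeries (hq : ∀ n, 1 - q ^ (n + 1) ≠ 0) :
    rescale q (galoisSeries q) =
      galoisSeries q - X * galoisSeries q - X * galoisSeries q + X * (X * galoisSeries q) := by
  rw [galoisSeries, map_pow, ← one_sub_X_mul_eulerSeries hq]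
  ring

theorem one_sub_mul_coeff_one_galoisSeries (hq : ∀ n, 1 - q ^ (n + 1) ≠ 0) :
    (1 - q) * coeff 1 (galoisSeries q) = 2 := by
  have hcoeff := congrArg (coeff 1) (rescale_galoisSeries hq)
  simp only [coeff_rescale, map_add, map_sub, coeff_succ_X_mul, coeff_zero_X_mul,
    coeff_zero_galoisSeries] at hcoeff
  linear_combination -hcoeff

theorem coeff_galoisSeries_rec (hq : ∀ n, 1 - q ^ (n + 1) ≠ 0) (h : ℕ) :
    coeff h (galoisSeries q) + (1 - q ^ (h + 2)) * coeff (h + 2) (galoisSeries q) =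
      2 * coeff (h + 1) (galoisSeries q) := by
  have hcoeff := congrArg (coeff (h + 2)) (rescale_galoisSeries hq)
  simp only [coeff_rescale, map_add, map_sub, coeff_succ_X_mul] at hcoeff
  linear_combination -hcoeff

end Field

section Real

variable {q : ℝ}

theorem one_sub_pow_succ_pos (hq : |q| < 1) (n : ℕ) : 0 < 1 - q ^ (n + 1) :=
  sub_pos.2 <| (le_abs_self _).trans_lt <| by
    rw [abs_pow]
    exact pow_lt_one₀ (abs_nonneg q) hq n.succ_ne_zero

theorem coeff_galoisSeries_pos (hq : |q| < 1) (h : ℕ) : 0 < coeff h (galoisSeries q) := by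
  have coeff_pos (k : ℕ) : 0 < coeff k (eulerSeries q) := by
    rw [eulerSeries, coeff_mk]
    exact inv_pos.2 (prod_pos fun i _ => one_sub_pow_succ_pos hq i)
  rw [galoisSeries, sq, coeff_mul]
  exact sum_pos (fun p _ => mul_pos (coeff_pos p.1) (coeff_pos p.2)) ⟨(0, h), by simp⟩

theorem qInt_succ_pos (hq : |q| < 1) (n : ℕ) : 0 < qInt q (n + 1) := by
  refine pos_of_mul_pos_right (b := qInt q (n + 1)) (a := 1 - q) ?_ ?_
  · rw [one_sub_mul_qInt]
    exact one_sub_pow_succ_pos hq n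
  · linarith [le_abs_self q]

theorem tendsto_qInt (hq : |q| < 1) : Tendsto (qInt q) atTop (𝓝 (1 - q)⁻¹) :=
  (hasSum_geometric_of_abs_lt_one hq).tendsto_sum_nat

theorem tendsto_dyckPrefixSum_qInt_rpow (hq : |q| < 1) :
    Tendsto (fun n : ℕ => dyckPrefixSum (fun i => qInt q (i + 1)) (2 * n) 0 ^
      (1 / ((2 * n : ℕ) : ℝ))) atTop (𝓝 (2 / √(1 - q))) := by
  have hq' : 0 < 1 - q := by linarith [le_abs_self q]
  have hne (n : ℕ) : 1 - q ^ (n + 1) ≠ 0 := (one_sub_pow_succ_pos hq n).ne'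
  set s := √(1 - q)
  have hs : 0 < s := Real.sqrt_pos.2 hq'
  have s_sq : s ^ 2 = 1 - q := Real.sq_sqrt hq'.le
  have s_sq_mul (n : ℕ) : s ^ 2 * qInt q n = 1 - q ^ n := by rw [s_sq, one_sub_mul_qInt]
  refine tendsto_dyckPrefixSum_rpow (qInt_succ_pos hq) (by positivity) ?_
    (φ := fun h => s ^ h * coeff h (galoisSeries q))
    (fun h => (mul_pos (pow_pos hs h) (coeff_galoisSeries_pos hq h)).le)
    (by simp [coeff_zero_galoisSeries]) (le_of_eq ?_) fun h => le_of_eq ?_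
  · have limit_eq : (2 / s) ^ 2 / 4 = (1 - q)⁻¹ := by
      rw [div_pow, s_sq]
      ring
    rw [limit_eq]
    exact (tendsto_qInt hq).comp (tendsto_add_atTop_nat 1)
  · have one := one_sub_mul_coeff_one_galoisSeries hne
    rw [← s_sq] at one
    simp only [coeff_zero_galoisSeries, qInt, zero_add, sum_range_one, pow_zero, pow_one]
    field_simp
    linear_combination one
  · have rec_h := coeff_galoisSeries_rec hne h
    rw [← s_sq_mul] at rec_h
    field_simp
    linear_combination s ^ (h + 1) * rec_h

end Real

end QAnalogues

section PartialPairing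

variable {N : ℕ} {π : Finset (Finset ℕ)}

/-- A partial pairing of `[N] = {1, …, N}`: a set of pairwise disjoint blocks of size `2`, which
need not exhaust `[N]`. -/
structure IsPartialPairing (N : ℕ) (π : Finset (Finset ℕ)) : Prop where
  card_eq_two : ∀ B ∈ π, #B = 2
  subset_Icc : ∀ B ∈ π, B ⊆ Icc 1 N
  pairwiseDisjoint : (π : Set (Finset ℕ)).PairwiseDisjoint id

/-- The finite set of all partial pairings of `[N]`. -/
noncomputable def partialPairings (N : ℕ) : Finset (Finset (Finset ℕ)) :=
  {π ∈ (Icc 1 N).powerset.powerset | IsPartialPairing N π}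

/-- The points of `[N]` that lie in no block of `π`. -/
def openPoints (N : ℕ) (π : Finset (Finset ℕ)) : Finset ℕ := Icc 1 N \ π.biUnion id

/-- The point `x` lies strictly between the two ends of the chord `B`. -/
def Covers (B : Finset ℕ) (x : ℕ) : Prop := ∃ a b : ℕ, a < x ∧ x < b ∧ B = {a, b}

/-- The number of crossings of a partial pairing of `[N]`, where each open point `x` is regarded as
a half-open chord from `x` to infinity; such a chord crosses exactly the blocks that cover `x`. -/
noncomputable def partialCrNum (N : ℕ) (π : Finset (Finset ℕ)) : ℕ :=
  crNum π + ∑ x ∈ openPoints N π, #{B ∈ π | Covers B x}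

theorem mem_partialPairings : π ∈ partialPairings N ↔ IsPartialPairing N π := by
  simp only [partialPairings, mem_filter, mem_powerset, and_iff_right_iff_imp]
  exact fun h B hB => mem_powerset.2 (h.subset_Icc B hB)

theorem mem_openPoints {x : ℕ} : x ∈ openPoints N π ↔ (1 ≤ x ∧ x ≤ N) ∧ ∀ B ∈ π, x ∉ B := by
  simp [openPoints]

namespace IsPartialPairing

theorem one_le_and_le_of_mem (hπ : IsPartialPairing N π) {B : Finset ℕ} (hB : B ∈ π) {x : ℕ}
    (hx : x ∈ B) : 1 ≤ x ∧ x ≤ N :=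
  mem_Icc.1 (hπ.subset_Icc B hB hx)

theorem succ_notMem (hπ : IsPartialPairing N π) {B : Finset ℕ} (hB : B ∈ π) : N + 1 ∉ B :=
  fun hN => (hπ.one_le_and_le_of_mem hB hN).2.not_gt N.lt_succ_self

theorem pair_succ_notMem (hπ : IsPartialPairing N π) (c : ℕ) : {c, N + 1} ∉ π :=
  fun h => hπ.succ_notMem h (by simp)

theorem two_mul_card_le (hπ : IsPartialPairing N π) : 2 * #π ≤ N :=
  calc 2 * #π = ∑ B ∈ π, #B := by rw [sum_const_nat hπ.card_eq_two, mul_comm]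
    _ = #(π.biUnion id) := (card_biUnion hπ.pairwiseDisjoint).symm
    _ ≤ #(Icc 1 N) := card_le_card (biUnion_subset.2 hπ.subset_Icc)
    _ = N := by simp

end IsPartialPairing

section Succ

theorem isPartialPairing_succ_and_mem_openPoints_iff :
    IsPartialPairing (N + 1) π ∧ N + 1 ∈ openPoints (N + 1) π ↔ IsPartialPairing N π := by
  refine ⟨fun ⟨hπ, hN⟩ => ⟨hπ.card_eq_two, fun B hB x hx => ?_, hπ.pairwiseDisjoint⟩,
    fun hπ => ⟨⟨hπ.card_eq_two, fun B hB => (hπ.subset_Icc B hB).trans ?_, hπ.pairwiseDisjoint⟩,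
      mem_openPoints.2 ⟨by omega, fun B hB => hπ.succ_notMem hB⟩⟩⟩
  · have hx_ne : x ≠ N + 1 := by
      rintro rfl
      exact (mem_openPoints.1 hN).2 B hB hx
    have := hπ.one_le_and_le_of_mem hB hx
    exact mem_Icc.2 (by omega)
  · exact Icc_subset_Icc_right N.le_succ

theorem IsPartialPairing.succ (hπ : IsPartialPairing N π) : IsPartialPairing (N + 1) π :=
  (isPartialPairing_succ_and_mem_openPoints_iff.2 hπ).1

theorem IsPartialPairing.insert_pair_succ (hπ : IsPartialPairing N π) {c : ℕ}
    (hc : c ∈ openPoints N π) : IsPartialPairing (N + 1) (insert {c, N + 1} π) := by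
  obtain ⟨hc_mem, hc_open⟩ := mem_openPoints.1 hc
  refine ⟨(forall_mem_insert _ _ _).2 ⟨card_pair (by omega), hπ.card_eq_two⟩,
    (forall_mem_insert _ _ _).2 ⟨?_, hπ.succ.subset_Icc⟩, ?_⟩
  · simp only [insert_subset_iff, singleton_subset_iff, mem_Icc]
    omega
  · rw [coe_insert]
    refine hπ.pairwiseDisjoint.insert fun B hB _ => ?_
    simpa using ⟨hc_open B hB, hπ.succ_notMem hB⟩

theorem IsPartialPairing.erase_pair_succ (hπ : IsPartialPairing (N + 1) π) {c : ℕ}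
    (hc : {c, N + 1} ∈ π) :
    IsPartialPairing N (π.erase {c, N + 1}) ∧ c ∈ openPoints N (π.erase {c, N + 1}) := by
  have disjoint_pair : ∀ B ∈ π.erase {c, N + 1}, c ∉ B ∧ N + 1 ∉ B := fun B hB => by
    simpa [Function.onFun] using
      hπ.pairwiseDisjoint hc (mem_of_mem_erase hB) (ne_of_mem_erase hB).symm
  have hc_ne : c ≠ N + 1 := by
    rintro rfl
    simpa using hπ.card_eq_two _ hc
  have hc_mem := hπ.one_le_and_le_of_mem hc (mem_insert_self c _)
  refine ⟨isPartialPairing_succ_and_mem_openPoints_iff.1 ⟨⟨?_, ?_, ?_⟩, ?_⟩, ?_⟩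
  · exact fun B hB => hπ.card_eq_two B (mem_of_mem_erase hB)
  · exact fun B hB => hπ.subset_Icc B (mem_of_mem_erase hB)
  · exact hπ.pairwiseDisjoint.subset (coe_subset.2 (erase_subset _ _))
  · exact mem_openPoints.2 ⟨by omega, fun B hB => (disjoint_pair B hB).2⟩
  · exact mem_openPoints.2 ⟨by omega, fun B hB => (disjoint_pair B hB).1⟩

theorem IsPartialPairing.exists_pair_succ_mem (hπ : IsPartialPairing (N + 1) π)
    (hN : N + 1 ∉ openPoints (N + 1) π) : ∃ c, {c, N + 1} ∈ π := by
  obtain ⟨B, hB, hNB⟩ : ∃ B ∈ π, N + 1 ∈ B := by simpa [mem_openPoints] using hN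
  obtain ⟨x, y, -, rfl⟩ := Finset.card_eq_two.1 (hπ.card_eq_two B hB)
  simp only [mem_insert, mem_singleton] at hNB
  rcases hNB with rfl | rfl
  · exact ⟨y, pair_comm _ y ▸ hB⟩
  · exact ⟨x, hB⟩

theorem insert_pair_succ_inj {π' : Finset (Finset ℕ)} (hπ : IsPartialPairing N π)
    (hπ' : IsPartialPairing N π') {c c' : ℕ} (hc : c ∈ openPoints N π)
    (h : insert {c, N + 1} π = insert {c', N + 1} π') : π = π' ∧ c = c' := by
  have pair_eq : ({c, N + 1} : Finset ℕ) = {c', N + 1} :=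
    (mem_insert.1 (h ▸ mem_insert_self _ π)).resolve_right (hπ'.pair_succ_notMem c)
  have c_eq : c = c' := by
    have hmem : c ∈ ({c', N + 1} : Finset ℕ) := pair_eq ▸ mem_insert_self c _
    have := (mem_openPoints.1 hc).1
    simp only [mem_insert, mem_singleton] at hmem
    omega
  subst c_eq
  refine ⟨?_, rfl⟩
  rw [← erase_insert (hπ.pair_succ_notMem c), h, erase_insert (hπ'.pair_succ_notMem c)]

theorem sum_partialPairings_succ {M : Type*} [AddCommMonoid M] (N : ℕ)
    (g : Finset (Finset ℕ) → M) :
    ∑ π ∈ partialPairings (N + 1), g π = ∑ π ∈ partialPairings N, g π +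
      ∑ π ∈ partialPairings N, ∑ c ∈ openPoints N π, g (insert {c, N + 1} π) := by
  rw [← sum_filter_add_sum_filter_not _ (fun π => N + 1 ∈ openPoints (N + 1) π)]
  congr 1
  · refine sum_congr (Finset.ext fun π => ?_) fun _ _ => rfl
    rw [mem_filter, mem_partialPairings, mem_partialPairings,
      isPartialPairing_succ_and_mem_openPoints_iff]
  · rw [sum_sigma']
    symm
    refine sum_bij (fun p _ => insert {p.2, N + 1} p.1) ?_ ?_ ?_ fun _ _ => rfl
    · rintro ⟨π, c⟩ hp
      simp only [mem_sigma, mem_filter, mem_partialPairings] at hp ⊢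
      exact ⟨hp.1.insert_pair_succ hp.2, fun hN =>
        (mem_openPoints.1 hN).2 _ (mem_insert_self _ π) (by simp)⟩
    · rintro ⟨π, c⟩ hp ⟨π', c'⟩ hp' h
      simp only [mem_sigma, mem_partialPairings] at hp hp'
      obtain ⟨rfl, rfl⟩ := insert_pair_succ_inj hp.1 hp'.1 hp.2 h
      rfl
    · intro π hπ
      simp only [mem_filter, mem_partialPairings] at hπ
      obtain ⟨c, hc⟩ := hπ.1.exists_pair_succ_mem hπ.2
      refine ⟨⟨π.erase {c, N + 1}, c⟩, ?_, insert_erase hc⟩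
      simpa only [mem_sigma, mem_partialPairings] using hπ.1.erase_pair_succ hc

theorem openPoints_succ (hπ : IsPartialPairing N π) :
    openPoints (N + 1) π = insert (N + 1) (openPoints N π) := by
  have succ_notMem : N + 1 ∉ π.biUnion id := by
    simpa using fun B hB => hπ.succ_notMem hB
  rw [openPoints, openPoints, ← insert_Icc_right_eq_Icc_add_one (by omega),
    insert_sdiff_of_notMem _ succ_notMem]

theorem succ_notMem_openPoints : N + 1 ∉ openPoints N π := by
  simp [mem_openPoints]

theorem openPoints_insert_pair_succ (c : ℕ) :
    openPoints (N + 1) (insert {c, N + 1} π) = (openPoints N π).erase c := by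
  ext x
  simp only [mem_erase, mem_openPoints, mem_insert, forall_eq_or_imp, mem_singleton, not_or]
  grind

end Succ

section Crossings

theorem pair_eq_pair_of_lt {a b c d : ℕ} (hab : a < b) (hcd : c < d)
    (h : ({a, b} : Finset ℕ) = {c, d}) : a = c ∧ b = d := by
  have ha : a ∈ ({c, d} : Finset ℕ) := h ▸ mem_insert_self a {b}
  have hb : b ∈ ({c, d} : Finset ℕ) := h ▸ mem_insert_of_mem (mem_singleton_self b)
  simp only [mem_insert, mem_singleton] at ha hb
  omega

theorem not_crossAsym_pair {c m : ℕ} {C : Finset ℕ} (hcm : c < m) (hC : ∀ x ∈ C, x ≤ m) :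
    ¬ CrossAsym {c, m} C := by
  rintro ⟨a, b, c', d, hac, hcb, hbd, hpair, rfl⟩
  obtain ⟨rfl, rfl⟩ := pair_eq_pair_of_lt hcm (hac.trans hcb) hpair
  exact (hC d (by simp)).not_gt hbd

theorem crossAsym_pair_iff_covers {c m : ℕ} {B : Finset ℕ} (hcm : c < m) (hB : ∀ x ∈ B, x < m) :
    CrossAsym B {c, m} ↔ Covers B c := by
  constructor
  · rintro ⟨a, b, c', d, hac, hcb, hbd, rfl, hpair⟩
    obtain ⟨rfl, rfl⟩ := pair_eq_pair_of_lt hcm (hcb.trans hbd) hpair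
    exact ⟨a, b, hac, hcb, rfl⟩
  · rintro ⟨a, b, hac, hcb, rfl⟩
    exact ⟨a, b, c, m, hac, hcb, hB b (by simp), rfl, rfl⟩

theorem covers_pair_iff {c m x : ℕ} (hcm : c < m) (hxm : x < m) : Covers {c, m} x ↔ c < x := by
  constructor
  · rintro ⟨a, b, hax, hxb, hpair⟩
    obtain ⟨rfl, rfl⟩ := pair_eq_pair_of_lt hcm (hax.trans hxb) hpair
    exact hax
  · exact fun hcx => ⟨c, m, hcx, hxm, rfl⟩

theorem Covers.exists_lt {B : Finset ℕ} {x : ℕ} (h : Covers B x) : ∃ b ∈ B, x < b := by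
  obtain ⟨a, b, -, hxb, rfl⟩ := h
  exact ⟨b, by simp, hxb⟩

theorem crNum_eq_sum (π : Finset (Finset ℕ)) :
    crNum π = ∑ C ∈ π, #{B ∈ π | CrossAsym B C} := by
  simp only [crNum, card_filter]
  rw [← sum_product_right', ← card_filter, ← Set.ncard_coe_finset]
  congr 1
  ext p
  simp [and_assoc]

theorem crNum_le_card_mul_card (π : Finset (Finset ℕ)) : crNum π ≤ #π * #π := by
  rw [crNum_eq_sum]
  exact sum_le_card_nsmul _ _ _ fun C _ => card_filter_le π _

theorem crNum_insert_pair_succ (hπ : IsPartialPairing N π) {c : ℕ} (hc : c ∈ openPoints N π) :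
    crNum (insert {c, N + 1} π) = crNum π + #{B ∈ π | Covers B c} := by
  have hcN : c < N + 1 := Nat.lt_succ_of_le (mem_openPoints.1 hc).1.2
  have not_cross : ∀ C ∈ insert {c, N + 1} π, ¬ CrossAsym {c, N + 1} C := fun C hC =>
    not_crossAsym_pair hcN fun x hx => ((hπ.insert_pair_succ hc).one_le_and_le_of_mem hC hx).2
  have cross_iff : ∀ B ∈ π, (CrossAsym B {c, N + 1} ↔ Covers B c) := fun B hB =>
    crossAsym_pair_iff_covers hcN fun x hx => Nat.lt_succ_of_le (hπ.one_le_and_le_of_mem hB hx).2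
  have drop_pair : ∀ C ∈ insert {c, N + 1} π,
      #{B ∈ insert {c, N + 1} π | CrossAsym B C} = #{B ∈ π | CrossAsym B C} := fun C hC => by
    rw [filter_insert, if_neg (not_cross C hC)]
  rw [crNum_eq_sum, sum_congr rfl drop_pair, sum_insert (hπ.pair_succ_notMem c), ← crNum_eq_sum,
    filter_congr cross_iff, add_comm]

theorem partialCrNum_succ (hπ : IsPartialPairing N π) :
    partialCrNum (N + 1) π = partialCrNum N π := by
  have not_covers : ∀ B ∈ π, ¬ Covers B (N + 1) := fun B hB h => by
    obtain ⟨b, hb, hNb⟩ := h.exists_lt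
    exact (hπ.succ.one_le_and_le_of_mem hB hb).2.not_gt hNb
  rw [partialCrNum, partialCrNum, openPoints_succ hπ, sum_insert succ_notMem_openPoints,
    filter_false_of_mem not_covers, card_empty, zero_add]

theorem partialCrNum_insert_pair_succ (hπ : IsPartialPairing N π) {c : ℕ}
    (hc : c ∈ openPoints N π) :
    partialCrNum (N + 1) (insert {c, N + 1} π) =
      partialCrNum N π + #{x ∈ openPoints N π | c < x} := by
  have lt_succ {x : ℕ} (hx : x ∈ openPoints N π) : x < N + 1 :=
    Nat.lt_succ_of_le (mem_openPoints.1 hx).1.2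
  have covered (x : ℕ) (hx : x ∈ (openPoints N π).erase c) :
      #{B ∈ insert {c, N + 1} π | Covers B x} =
        #{B ∈ π | Covers B x} + if c < x then 1 else 0 := by
    rw [filter_insert]
    simp only [covers_pair_iff (lt_succ hc) (lt_succ (mem_of_mem_erase hx))]
    split_ifs
    · exact card_insert_of_notMem fun h => hπ.pair_succ_notMem c (mem_of_mem_filter _ h)
    · rfl
  have card_later : ∑ x ∈ (openPoints N π).erase c, (if c < x then 1 else 0) =
      #{x ∈ openPoints N π | c < x} := by
    rw [card_filter, ← add_sum_erase _ _ hc, if_neg (lt_irrefl c), zero_add]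
  rw [partialCrNum, partialCrNum, openPoints_insert_pair_succ, crNum_insert_pair_succ hπ hc,
    sum_congr rfl covered, sum_add_distrib, card_later, ← add_sum_erase _ _ hc]
  ring

end Crossings

section GeneratingFunction

variable {R : Type*} [CommSemiring R]

theorem sum_pow_card_filter_lt {α : Type*} [LinearOrder α] (q : R) (S : Finset α) :
    ∑ c ∈ S, q ^ #{x ∈ S | c < x} = qInt q #S := by
  induction S using Finset.induction_on_min with
  | empty => simp [qInt]
  | insert a S ha ih =>
    have ha_notMem : a ∉ S := fun h => lt_irrefl _ (ha a h)
    have card_min : #{x ∈ insert a S | a < x} = #S := by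
      rw [filter_insert, if_neg (lt_irrefl a), filter_true_of_mem ha]
    have drop_min : ∀ c ∈ S, q ^ #{x ∈ insert a S | c < x} = q ^ #{x ∈ S | c < x} :=
      fun c hc => by rw [filter_insert, if_neg (ha c hc).not_gt]
    rw [sum_insert ha_notMem, card_min, sum_congr rfl drop_min, ih,
      card_insert_of_notMem ha_notMem, qInt, qInt, sum_range_succ, add_comm]

/-- The generating function of the partial pairings of `[N]` with `h` open points by number of
crossings. -/
noncomputable def partialPairingSum (q : R) (N h : ℕ) : R :=
  ∑ π ∈ partialPairings N with #(openPoints N π) = h, q ^ partialCrNum N π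

theorem partialPairings_zero : partialPairings 0 = {∅} := by
  ext π
  rw [mem_partialPairings, mem_singleton]
  refine ⟨fun hπ => ?_, ?_⟩
  · simpa using hπ.two_mul_card_le
  · rintro rfl
    constructor <;> simp

theorem partialPairingSum_succ (q : R) (N h : ℕ) :
    partialPairingSum q (N + 1) h =
      ∑ π ∈ partialPairings N with #(openPoints N π) + 1 = h, q ^ partialCrNum N π +
        qInt q (h + 1) * partialPairingSum q N (h + 1) := by
  simp only [partialPairingSum, sum_filter]
  rw [sum_partialPairings_succ, mul_sum]
  congr 1 <;> refine sum_congr rfl fun π hπ => ?_ <;> rw [mem_partialPairings] at hπ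
  · rw [openPoints_succ hπ, card_insert_of_notMem succ_notMem_openPoints, partialCrNum_succ hπ]
  · have close (c : ℕ) (hc : c ∈ openPoints N π) :
        (if #(openPoints (N + 1) (insert {c, N + 1} π)) = h then
          q ^ partialCrNum (N + 1) (insert {c, N + 1} π) else 0) =
        (if #(openPoints N π) = h + 1 then q ^ partialCrNum N π else 0) *
          q ^ #{x ∈ openPoints N π | c < x} := by
      rw [openPoints_insert_pair_succ, partialCrNum_insert_pair_succ hπ hc, pow_add, ite_mul,
        zero_mul, ← card_erase_add_one hc]
      simp only [Nat.add_right_cancel_iff]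
    rw [sum_congr rfl close, ← mul_sum, sum_pow_card_filter_lt, mul_comm]
    split_ifs with hcard <;> simp [hcard]

theorem partialPairingSum_eq_dyckPrefixSum (q : R) (N h : ℕ) :
    partialPairingSum q N h = dyckPrefixSum (fun i => qInt q (i + 1)) N h := by
  induction N generalizing h with
  | zero =>
    cases h <;> simp [partialPairingSum, partialPairings_zero, dyckPrefixSum, openPoints,
      partialCrNum, crNum]
  | succ N ih =>
    rw [partialPairingSum_succ, ih]
    cases h with
    | zero => simp [dyckPrefixSum_succ_zero]
    | succ h =>
      rw [dyckPrefixSum_succ_succ, ← ih h, partialPairingSum]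
      simp only [Nat.add_right_cancel_iff]

end GeneratingFunction

theorem isPairing_iff {n : ℕ} :
    IsPairing n π ↔ IsPartialPairing (2 * n) π ∧ openPoints (2 * n) π = ∅ := by
  rw [eq_empty_iff_forall_notMem]
  constructor
  · rintro ⟨hblock, hcover⟩
    refine ⟨⟨fun B hB => (hblock B hB).1, fun B hB => (hblock B hB).2,
      fun B hB C hC hBC => disjoint_left.2 fun x hxB hxC => hBC ?_⟩, fun x hx => ?_⟩
    · exact (hcover x ((hblock B hB).2 hxB)).unique ⟨hB, hxB⟩ ⟨hC, hxC⟩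
    · obtain ⟨hx_mem, hx_open⟩ := mem_openPoints.1 hx
      obtain ⟨B, ⟨hB, hxB⟩, -⟩ := hcover x (mem_Icc.2 hx_mem)
      exact hx_open B hB hxB
  · rintro ⟨hπ, hopen⟩
    refine ⟨fun B hB => ⟨hπ.card_eq_two B hB, hπ.subset_Icc B hB⟩, fun x hx => ?_⟩
    obtain ⟨B, hB, hxB⟩ : ∃ B ∈ π, x ∈ B := by
      by_contra! hx_open
      exact hopen x (mem_openPoints.2 ⟨mem_Icc.1 hx, hx_open⟩)
    exact ⟨B, ⟨hB, hxB⟩, fun C hC =>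
      hπ.pairwiseDisjoint.elim_finset hC.1 hB x hC.2 hxB⟩

theorem tCount_eq_card (n k : ℕ) :
    tCount n k = #{π ∈ {π ∈ partialPairings (2 * n) | #(openPoints (2 * n) π) = 0} |
      crNum π = k} := by
  rw [tCount, ← Set.ncard_coe_finset]
  congr 1
  ext π
  simp [isPairing_iff, mem_partialPairings]

theorem TpolyR_eq_partialPairingSum (n : ℕ) (q : ℝ) :
    TpolyR n q = partialPairingSum q (2 * n) 0 := by
  have crNum_mem_range : ∀ π ∈ {π ∈ partialPairings (2 * n) | #(openPoints (2 * n) π) = 0},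
      crNum π ∈ range (n * n + 1) := fun π hπ => by
    have card_le : #π ≤ n := by
      have := (mem_partialPairings.1 (mem_of_mem_filter π hπ)).two_mul_card_le
      omega
    exact mem_range_succ_iff.2
      ((crNum_le_card_mul_card π).trans (Nat.mul_le_mul card_le card_le))
  have partialCrNum_eq : ∀ π ∈ {π ∈ partialPairings (2 * n) | #(openPoints (2 * n) π) = 0},
      partialCrNum (2 * n) π = crNum π := fun π hπ => by
    rw [partialCrNum, card_eq_zero.1 (mem_filter.1 hπ).2, sum_empty, add_zero]
  have crNum_sum : partialPairingSum q (2 * n) 0 =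
      ∑ π ∈ partialPairings (2 * n) with #(openPoints (2 * n) π) = 0, q ^ crNum π :=
    sum_congr rfl fun π hπ => by rw [partialCrNum_eq π hπ]
  rw [crNum_sum, TpolyR, ← sum_fiberwise_of_maps_to crNum_mem_range]
  refine sum_congr rfl fun k _ => ?_
  rw [tCount_eq_card, sum_congr rfl fun π hπ => by rw [(mem_filter.1 hπ).2], sum_const,
    nsmul_eq_mul]

end PartialPairing

/-- For every `q ∈ (-1,1)`, `|T_n(q)|^{1/(2n)} → 2/√(1−q)` as `n → ∞`. -/
theorem tpoly_abs_rpow_tendsto (q : ℝ) (h1 : -1 < q) (h2 : q < 1) :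
    Filter.Tendsto (fun n : ℕ => |TpolyR n q| ^ ((1 : ℝ) / (2 * (n : ℝ))))
      Filter.atTop (nhds (2 / Real.sqrt (1 - q))) := by
  have hq : |q| < 1 := abs_lt.2 ⟨h1, h2⟩
  have TpolyR_eq (n : ℕ) : TpolyR n q = dyckPrefixSum (fun i => qInt q (i + 1)) (2 * n) 0 := by
    rw [TpolyR_eq_partialPairingSum, partialPairingSum_eq_dyckPrefixSum]
  refine (tendsto_dyckPrefixSum_qInt_rpow hq).congr fun n => ?_
  rw [TpolyR_eq, abs_of_nonneg (dyckPrefixSum_nonneg (fun i => (qInt_succ_pos hq i).le) _ _)]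
  push_cast
  rfl
end

section
/- For every n ≥ 1, there is no parity-reversing pairing on [2n] with exactly one crossing and no parity-reversing pairing on [2n] with exactly two crossings; that is, r_{n,1} = 0 and r_{n,2} = 0. -/
open scoped Classical

/-! The crossing graph has the blocks as vertices and the crossings as edges. The points strictly
between the ends of a block `{a, b}` are distributed among the blocks, and a block crosses `{a, b}`
exactly when it contains one of them rather than none or two. In a parity-reversing pairing
`b - a - 1` is even, so every block has even degree in the crossing graph. Hence an edge of this
graph meets a further edge at each of its ends, and these three edges are distinct. -/

open Finset

section Pairs

variable {α : Type*}

theorem pair_eq_pair_iff_of_lt [LinearOrder α] {x y z w : α} (hxy : x < y)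
    (hzw : z < w) : ({x, y} : Finset α) = {z, w} ↔ x = z ∧ y = w := by
  rw [← coe_inj, coe_pair, coe_pair, Set.pair_eq_pair_iff, or_iff_left_iff_imp]
  rintro ⟨rfl, rfl⟩
  exact (hxy.asymm hzw).elim

theorem odd_card_inter_pair_iff_xor [DecidableEq α] {s : Finset α} {x y : α}
    (hxy : x ≠ y) : Odd #(s ∩ {x, y}) ↔ Xor (x ∈ s) (y ∈ s) := by
  by_cases hx : x ∈ s <;> by_cases hy : y ∈ s <;>
    simp [inter_insert_of_mem, inter_insert_of_notMem, Xor, hx, hy, hxy]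

end Pairs

section Graph

variable {V : Type*} {G : SimpleGraph V} [Fintype G.edgeSet] [G.LocallyFinite]

theorem degree_add_degree_le_card_edgeFinset_add_one {u v : V} (huv : G.Adj u v) :
    G.degree u + G.degree v ≤ #G.edgeFinset + 1 := by
  have hinter : G.incidenceFinset u ∩ G.incidenceFinset v = {s(u, v)} := by
    simpa [← coe_inj] using G.incidenceSet_inter_incidenceSet_of_adj huv
  have hunion : G.incidenceFinset u ∪ G.incidenceFinset v ⊆ G.edgeFinset :=
    union_subset (G.incidenceFinset_subset u) (G.incidenceFinset_subset v)
  calc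
    G.degree u + G.degree v
        = #(G.incidenceFinset u ∪ G.incidenceFinset v) + #{s(u, v)} := by
      rw [← hinter, card_union_add_card_inter, G.card_incidenceFinset_eq_degree,
        G.card_incidenceFinset_eq_degree]
    _ ≤ #G.edgeFinset + 1 := Nat.add_le_add (card_le_card hunion) (card_singleton _).le

theorem three_le_card_edgeFinset_of_even_degree (heven : ∀ w, Even (G.degree w))
    (hG : G.edgeFinset.Nonempty) : 3 ≤ #G.edgeFinset := by
  obtain ⟨⟨u, v⟩, he⟩ := hG
  have huv : G.Adj u v := by simpa using he
  have two_le_degree {w x : V} (hwx : G.Adj w x) : 2 ≤ G.degree w := by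
    have := (G.degree_pos_iff_exists_adj w).2 ⟨x, hwx⟩
    have := heven w
    grind
  have := two_le_degree huv
  have := two_le_degree huv.symm
  have := degree_add_degree_le_card_edgeFinset_add_one huv
  omega

end Graph

section Crossings

variable {a b c d : ℕ} {B C : Finset ℕ}

theorem crossAsym_pair_iff (hab : a < b) (hcd : c < d) :
    CrossAsym {a, b} {c, d} ↔ a < c ∧ c < b ∧ b < d := by
  refine ⟨?_, fun ⟨hac, hcb, hbd⟩ ↦ ⟨a, b, c, d, hac, hcb, hbd, rfl, rfl⟩⟩
  rintro ⟨a', b', c', d', hac, hcb, hbd, hB, hC⟩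
  obtain ⟨rfl, rfl⟩ := (pair_eq_pair_iff_of_lt hab (hac.trans hcb)).1 hB
  obtain ⟨rfl, rfl⟩ := (pair_eq_pair_iff_of_lt hcd (hcb.trans hbd)).1 hC
  exact ⟨hac, hcb, hbd⟩

theorem CrossAsym.asymm (h : CrossAsym B C) : ¬ CrossAsym C B := by
  obtain ⟨a, b, c, d, hac, hcb, hbd, rfl, rfl⟩ := h
  rw [crossAsym_pair_iff (hcb.trans hbd) (hac.trans hcb)]
  omega

theorem CrossAsym.irrefl (B : Finset ℕ) : ¬ CrossAsym B B := fun h ↦ h.asymm h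

theorem crosses_pair_iff_xor (hab : a < b) (hcd : c ≠ d)
    (hdisj : Disjoint ({a, b} : Finset ℕ) {c, d}) :
    Crosses {a, b} {c, d} ↔ Xor (c ∈ Ioo a b) (d ∈ Ioo a b) := by
  wlog hlt : c < d generalizing c d
  · rw [pair_comm c d] at hdisj ⊢
    rw [this hcd.symm hdisj (by omega), xor_comm]
  rw [Crosses, crossAsym_pair_iff hab hlt, crossAsym_pair_iff hlt hab]
  simp only [disjoint_insert_left, disjoint_singleton_left, mem_insert, mem_singleton] at hdisj
  simp only [mem_Ioo, Xor]
  omega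

theorem crosses_pair_iff_odd_card_inter (hab : a < b) (hC : #C = 2)
    (hdisj : Disjoint {a, b} C) : Crosses {a, b} C ↔ Odd #(Ioo a b ∩ C) := by
  obtain ⟨c, d, hcd, rfl⟩ := card_eq_two.1 hC
  rw [crosses_pair_iff_xor hab hcd hdisj, odd_card_inter_pair_iff_xor hcd]

/-- The crossing graph on all finite sets of naturals; its restriction to the blocks of a pairing
is the crossing graph of that pairing. -/
def crossingGraph : SimpleGraph (Finset ℕ) where
  Adj := Crosses
  symm := ⟨fun _ _ ↦ Or.symm⟩
  loopless := ⟨fun B h ↦ h.elim (CrossAsym.irrefl B) (CrossAsym.irrefl B)⟩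

@[simp]
theorem crossingGraph_adj : crossingGraph.Adj B C ↔ Crosses B C := Iff.rfl

end Crossings

section Pairings

variable {n : ℕ} {π : Finset (Finset ℕ)} {a b : ℕ} {B C : Finset ℕ}

theorem IsPairing.pairwiseDisjoint (hπ : IsPairing n π) :
    (π : Set (Finset ℕ)).PairwiseDisjoint id := fun B hB _ hC hBC ↦
  disjoint_left.2 fun x hxB hxC ↦
    hBC ((hπ.2 x ((hπ.1 B hB).2 hxB)).unique ⟨hB, hxB⟩ ⟨hC, hxC⟩)

theorem IsPairing.sum_card_inter (hπ : IsPairing n π) {s : Finset ℕ} (hs : s ⊆ Icc 1 (2 * n)) :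
    ∑ C ∈ π, #(s ∩ C) = #s := by
  have hone : ∀ x ∈ s, #{C ∈ π | x ∈ C} = 1 := fun x hx ↦ by
    simpa [card_eq_one, singleton_iff_unique_mem] using hπ.2 x (hs hx)
  simpa using Finset.sum_card_inter hone

theorem IsPairing.crosses_iff_odd_card_inter (hπ : IsPairing n π) (hab : a < b)
    (hB : {a, b} ∈ π) (hC : C ∈ π) : Crosses {a, b} C ↔ Odd #(Ioo a b ∩ C) := by
  obtain rfl | hne := eq_or_ne {a, b} C
  · simp [Crosses, CrossAsym.irrefl, inter_insert_of_notMem]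
  · exact crosses_pair_iff_odd_card_inter hab (hπ.1 C hC).1 (hπ.pairwiseDisjoint hB hC hne)

theorem IsPairing.even_card_crosses_iff (hπ : IsPairing n π) (hB : {a, b} ∈ π) :
    Even #{C ∈ π | Crosses {a, b} C} ↔ Odd (a + b) := by
  have hne : a ≠ b := card_pair_eq_two_iff.1 (hπ.1 _ hB).1
  wlog hab : a < b generalizing a b
  · rw [pair_comm] at hB ⊢
    rw [add_comm]
    exact this hB hne.symm (by omega)
  have hsub := (hπ.1 _ hB).2
  have hIoo : Ioo a b ⊆ Icc 1 (2 * n) := by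
    simp only [insert_subset_iff, singleton_subset_iff, mem_Icc] at hsub
    intro x
    simp only [mem_Ioo, mem_Icc]
    omega
  rw [filter_congr fun C hC ↦ hπ.crosses_iff_odd_card_inter hab hB hC,
    ← Nat.not_odd_iff_even, ← odd_sum_iff_odd_card_odd, hπ.sum_card_inter hIoo, Nat.card_Ioo]
  grind

theorem ParityReversing.even_card_crosses (hr : ParityReversing π) (hπ : IsPairing n π)
    (hB : B ∈ π) : Even #{C ∈ π | Crosses B C} := by
  obtain ⟨a, b, rfl, ha, hb⟩ := hr B hB
  exact (hπ.even_card_crosses_iff hB).2 (ha.add_even hb)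

theorem degree_induce_crossingGraph (B : (π : Set (Finset ℕ))) :
    (crossingGraph.induce (π : Set (Finset ℕ))).degree B = #{C ∈ π | Crosses B C} := by
  rw [← SimpleGraph.card_neighborFinset_eq_degree, ← card_map (Function.Embedding.subtype _)]
  congr 1
  ext C
  simp [and_comm]

theorem crNum_eq_card_edgeFinset (π : Finset (Finset ℕ)) :
    crNum π = #(crossingGraph.induce (π : Set (Finset ℕ))).edgeFinset := by
  rw [← Set.ncard_coe_finset, SimpleGraph.coe_edgeFinset]
  refine Set.ncard_congr (fun p hp ↦ s(⟨p.1, hp.1⟩, ⟨p.2, hp.2.1⟩)) ?_ ?_ ?_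
  · exact fun p hp ↦ Or.inl hp.2.2
  · rintro ⟨B, C⟩ ⟨B', C'⟩ ⟨_, _, h⟩ ⟨_, _, h'⟩ heq
    obtain ⟨rfl, rfl⟩ | ⟨rfl, rfl⟩ : B = B' ∧ C = C' ∨ B = C' ∧ C = B' := by simpa using heq
    · rfl
    · exact (h.asymm h').elim
  · rintro ⟨⟨B, hB⟩, ⟨C, hC⟩⟩ (h | h)
    · exact ⟨(B, C), ⟨hB, hC, h⟩, rfl⟩
    · exact ⟨(C, B), ⟨hC, hB, h⟩, Sym2.eq_swap⟩

theorem ParityReversing.three_le_crNum (hr : ParityReversing π) (hπ : IsPairing n π)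
    (hcr : crNum π ≠ 0) : 3 ≤ crNum π := by
  rw [crNum_eq_card_edgeFinset] at hcr ⊢
  refine three_le_card_edgeFinset_of_even_degree (fun B ↦ ?_) (card_ne_zero.1 hcr)
  rw [degree_induce_crossingGraph]
  exact hr.even_card_crosses hπ B.2

theorem rCount_eq_zero_of_lt_three {k : ℕ} (hk : k ≠ 0) (hk3 : k < 3) : rCount n k = 0 := by
  have hempty : {π | IsPairing n π ∧ ParityReversing π ∧ crNum π = k} = ∅ := by
    refine Set.eq_empty_of_forall_notMem ?_
    rintro π ⟨hπ, hr, rfl⟩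
    exact hk3.not_ge (hr.three_le_crNum hπ hk)
  rw [rCount, hempty, Set.ncard_empty]

end Pairings

/-- There are no parity-reversing pairings on `[2n]` with exactly one or two crossings. -/
theorem rCount_one_two_eq_zero (n : ℕ) (hn : 1 ≤ n) :
    rCount n 1 = 0 ∧ rCount n 2 = 0 :=
  ⟨rCount_eq_zero_of_lt_three one_ne_zero (by norm_num),
    rCount_eq_zero_of_lt_three two_ne_zero (by norm_num)⟩
end
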